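/- arXiv:1603.02319 — 3 statements merged into one kernel-verified Lean document; each statement's English description precedes it below -/
import Mathlib

section
/- Let g:(ℝ,0)→(ℝ^3,0) be the curve-germ g(t) = (t^4,t^5,t^7). For every germ at 0 of a smooth differential 2-form ω on ℝ^3 with dω = 0 on a neighbourhood of 0, there exist unique real numbers c_1,…,c_9 such that the 2-form ω − (c_1·dx_1∧dx_2 + c_2·dx_1∧dx_3 + c_3·dx_2∧dx_3 + c_4·x_1dx_1∧dx_2 + c_5·x_2dx_1∧dx_2 + c_6·x_1dx_1∧dx_3 + c_7·(x_2dx_1∧dx_3 + x_1dx_2∧dx_3) + c_8·x_2dx_2∧dx_3 + c_9·x_3dx_1∧dx_3) has zero algebraic restriction to g. (Equivalently: the algebraic restrictions to g of these nine closed 2-forms form a basis of the vector space of algebraic restrictions of closed 2-forms to g.) -/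
open Filter Topology

noncomputable section

/-- A (set-theoretic) differential 1-form on `ℝ^m`: a map assigning to each point a
function on tangent vectors. -/
def Form1 (m : ℕ) := (Fin m → ℝ) → (Fin m → ℝ) → ℝ

/-- A (set-theoretic) differential 2-form on `ℝ^m`. -/
def Form2 (m : ℕ) := (Fin m → ℝ) → (Fin m → ℝ) → (Fin m → ℝ) → ℝ

/-- A germ at `0` of a smooth differential 1-form: pointwise linear in the tangent
vector, and with coefficients smooth on a neighbourhood of `0`. -/
def IsForm1 (m : ℕ) (β : Form1 m) : Prop :=
  (∀ x u₁ u₂ (c : ℝ), β x (u₁ + c • u₂) = β x u₁ + c * β x u₂) ∧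
  (∀ u, ∃ U ∈ 𝓝 (0 : Fin m → ℝ), ContDiffOn ℝ (⊤ : ℕ∞) (fun x => β x u) U)

/-- A germ at `0` of a smooth differential 2-form: pointwise bilinear and alternating
in the tangent vectors, with coefficients smooth on a neighbourhood of `0`. -/
def IsForm2 (m : ℕ) (ω : Form2 m) : Prop :=
  (∀ x u₁ u₂ v (c : ℝ), ω x (u₁ + c • u₂) v = ω x u₁ v + c * ω x u₂ v) ∧
  (∀ x u v, ω x u v = - ω x v u) ∧
  (∀ u v, ∃ U ∈ 𝓝 (0 : Fin m → ℝ), ContDiffOn ℝ (⊤ : ℕ∞) (fun x => ω x u v) U)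

/-- The exterior derivative of a 1-form, evaluated on a pair of (constant) vectors. -/
def extD1 (m : ℕ) (β : Form1 m) : Form2 m :=
  fun x u v => fderiv ℝ (fun y => β y v) x u - fderiv ℝ (fun y => β y u) x v

/-- The exterior derivative of a 2-form, evaluated on a triple of (constant) vectors. -/
def extD2 (m : ℕ) (ω : Form2 m) (x u v w : Fin m → ℝ) : ℝ :=
  fderiv ℝ (fun y => ω y v w) x u - fderiv ℝ (fun y => ω y u w) x v
    + fderiv ℝ (fun y => ω y u v) x w

/-- A 2-form is closed near `0` if its exterior derivative vanishes near `0`. -/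
def Closed2 (m : ℕ) (ω : Form2 m) : Prop :=
  ∀ᶠ x in 𝓝 (0 : Fin m → ℝ), ∀ u v w, extD2 m ω x u v w = 0

/-- A 1-form vanishes on the image of a curve-germ. -/
def VanishesOn1 (m : ℕ) (β : Form1 m) (f : ℝ → (Fin m → ℝ)) : Prop :=
  ∀ᶠ t in 𝓝 (0 : ℝ), ∀ u, β (f t) u = 0

/-- A 2-form vanishes on the image of a curve-germ. -/
def VanishesOn2 (m : ℕ) (ω : Form2 m) (f : ℝ → (Fin m → ℝ)) : Prop :=
  ∀ᶠ t in 𝓝 (0 : ℝ), ∀ u v, ω (f t) u v = 0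

/-- A 2-form `ω` has zero algebraic restriction to the curve-germ `f` if `ω = α + dβ`
near `0` for a smooth 2-form `α` and a smooth 1-form `β` both vanishing on `im f`. -/
def ZeroAR2 (m : ℕ) (ω : Form2 m) (f : ℝ → (Fin m → ℝ)) : Prop :=
  ∃ (α : Form2 m) (β : Form1 m), IsForm2 m α ∧ IsForm1 m β ∧
    VanishesOn2 m α f ∧ VanishesOn1 m β f ∧
    ∀ᶠ x in 𝓝 (0 : Fin m → ℝ), ∀ u v, ω x u v = α x u v + extD1 m β x u v

/-- Two 2-forms have the same algebraic restriction to `f` if their difference has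
zero algebraic restriction to `f`. -/
def SameAR2 (m : ℕ) (ω₁ ω₂ : Form2 m) (f : ℝ → (Fin m → ℝ)) : Prop :=
  ZeroAR2 m (fun x u v => ω₁ x u v - ω₂ x u v) f

/-- The pullback of a 2-form by a (germ of) smooth map. -/
def pull2 (m : ℕ) (Φ : (Fin m → ℝ) → (Fin m → ℝ)) (ω : Form2 m) : Form2 m :=
  fun x u v => ω (Φ x) (fderiv ℝ Φ x u) (fderiv ℝ Φ x v)

/-- A germ of diffeomorphism of `(ℝ,0)`. -/
def IsDiffeoGerm1 (φ : ℝ → ℝ) : Prop :=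
  φ 0 = 0 ∧ (∃ U ∈ 𝓝 (0 : ℝ), ContDiffOn ℝ (⊤ : ℕ∞) φ U) ∧ deriv φ 0 ≠ 0

/-- A germ of diffeomorphism of `(ℝ^m,0)`. -/
def IsDiffeoGerm (m : ℕ) (Φ : (Fin m → ℝ) → (Fin m → ℝ)) : Prop :=
  Φ 0 = 0 ∧ (∃ U ∈ 𝓝 (0 : Fin m → ℝ), ContDiffOn ℝ (⊤ : ℕ∞) Φ U) ∧
    ∃ D : (Fin m → ℝ) ≃L[ℝ] (Fin m → ℝ),
      HasFDerivAt Φ (D : (Fin m → ℝ) →L[ℝ] (Fin m → ℝ)) 0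

/-- The constant 2-form `dxᵢ ∧ dxⱼ` on `ℝ^m` (indices `0`-based). -/
def wedge (m : ℕ) (i j : Fin m) : Form2 m := fun _ u v => u i * v j - u j * v i

/-- The 2-form `x_l · dxᵢ ∧ dxⱼ` on `ℝ^m` (indices `0`-based). -/
def mwedge (m : ℕ) (l i j : Fin m) : Form2 m :=
  fun x u v => x l * (u i * v j - u j * v i)

/-- The nine closed 2-forms of Proposition 6.2: `dx₁∧dx₂, dx₁∧dx₃, dx₂∧dx₃,
x₁dx₁∧dx₂, x₂dx₁∧dx₂, x₁dx₁∧dx₃, x₂dx₁∧dx₃ + x₁dx₂∧dx₃, x₂dx₂∧dx₃, x₃dx₁∧dx₃`. -/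
def basis457 : Fin 9 → Form2 3 :=
  ![wedge 3 0 1, wedge 3 0 2, wedge 3 1 2,
    mwedge 3 0 0 1, mwedge 3 1 0 1, mwedge 3 0 0 2,
    fun x u v => x 1 * (u 0 * v 2 - u 2 * v 0) + x 0 * (u 1 * v 2 - u 2 * v 1),
    mwedge 3 1 1 2, mwedge 3 2 0 2]



abbrev E3 := Fin 3 → ℝ

theorem hasFDerivAt_scaleInt {G : Type} [NormedAddCommGroup G] [NormedSpace ℝ G] [CompleteSpace G]
    (m : ℕ) (φ : E3 → G) (hφ : ContDiff ℝ (⊤ : ℕ∞) φ) (x : E3) :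
    HasFDerivAt (fun x => ∫ s in (0:ℝ)..1, s ^ m • φ (s • x))
      (∫ s in (0:ℝ)..1, s ^ (m+1) • fderiv ℝ φ (s • x)) x := by
  have hd : Continuous (fderiv ℝ φ) := hφ.continuous_fderiv (by simp)
  have hc : Continuous φ := hφ.continuous
  have hdiff : Differentiable ℝ φ := hφ.differentiable (by simp)
  have hK : IsCompact (Metric.closedBall (0 : E3) (‖x‖ + 1)) := isCompact_closedBall _ _
  obtain ⟨C, hC⟩ := hK.exists_bound_of_continuousOn hd.continuousOn
  refine intervalIntegral.hasFDerivAt_integral_of_dominated_of_fderiv_le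
    (F := fun x s => s ^ m • φ (s • x)) (F' := fun x s => s ^ (m+1) • fderiv ℝ φ (s • x))
    (bound := fun _ => C)
    (Metric.ball_mem_nhds x one_pos) ?_ ?_ ?_ ?_ ?_ ?_
  · refine Eventually.of_forall fun y => ?_
    exact (by fun_prop : Continuous fun s : ℝ => s ^ m • φ (s • y)).aestronglyMeasurable
  · exact (by fun_prop : Continuous fun s : ℝ => s ^ m • φ (s • x)).intervalIntegrable _ _
  · exact (by fun_prop : Continuous fun s : ℝ => s ^ (m+1) • fderiv ℝ φ (s • x)).aestronglyMeasurable
  · refine Eventually.of_forall fun s hs y hy => ?_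
    rw [Set.uIoc_of_le zero_le_one] at hs
    have hy' : ‖y‖ ≤ ‖x‖ + 1 := by
      have h1 : ‖y - x‖ < 1 := by simpa [dist_eq_norm] using hy
      have h2 : ‖y‖ ≤ ‖y - x‖ + ‖x‖ := by simpa using norm_add_le (y - x) x
      linarith
    have hb : ‖fderiv ℝ φ (s • y)‖ ≤ C := by
      apply hC
      rw [mem_closedBall_zero_iff, norm_smul, Real.norm_of_nonneg hs.1.le]
      nlinarith [norm_nonneg y, hs.1, hs.2]
    rw [norm_smul, norm_pow, Real.norm_of_nonneg hs.1.le]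
    have : s ^ (m+1) ≤ 1 := pow_le_one₀ hs.1.le hs.2
    nlinarith [norm_nonneg (fderiv ℝ φ (s • y)), pow_nonneg hs.1.le (m+1)]
  · exact intervalIntegrable_const
  · refine Eventually.of_forall fun s hs y hy => ?_
    have h1 : HasFDerivAt (fun y : E3 => s • y) (s • ContinuousLinearMap.id ℝ E3) y :=
      (hasFDerivAt_id y).const_smul s
    have h2 := ((hdiff (s • y)).hasFDerivAt.comp y h1).const_smul (s ^ m)
    refine h2.congr_fderiv ?_
    ext v
    simp [pow_succ, mul_smul]

theorem contDiff_scaleInt (n : ℕ) : ∀ {G : Type} [NormedAddCommGroup G] [NormedSpace ℝ G]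
    [CompleteSpace G] (m : ℕ) (φ : E3 → G), ContDiff ℝ (⊤ : ℕ∞) φ →
    ContDiff ℝ n (fun x => ∫ s in (0:ℝ)..1, s ^ m • φ (s • x)) := by
  induction n with
  | zero =>
    intro G _ _ _ m φ hφ
    refine contDiff_zero.2 ?_
    rw [continuous_iff_continuousAt]
    exact fun x => (hasFDerivAt_scaleInt m φ hφ x).continuousAt
  | succ n ih =>
    intro G _ _ _ m φ hφ
    refine (contDiff_succ_iff_hasFDerivAt).2 ⟨_, ih (m+1) (fderiv ℝ φ) ?_, fun x => hasFDerivAt_scaleInt m φ hφ x⟩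
    exact hφ.fderiv_right (by simp)

theorem hadamard3 (f : E3 → ℝ) (hf : ContDiff ℝ (⊤ : ℕ∞) f) :
    ∃ (c : ℝ) (f0 f1 f2 : E3 → ℝ), ContDiff ℝ (⊤ : ℕ∞) f0 ∧ ContDiff ℝ (⊤ : ℕ∞) f1 ∧
      ContDiff ℝ (⊤ : ℕ∞) f2 ∧ ∀ x, f x = c + x 0 * f0 x + x 1 * f1 x + x 2 * f2 x := by
  have hsm : ContDiff ℝ (⊤ : ℕ∞) (fderiv ℝ f) := hf.fderiv_right (by simp)
  let Φ : E3 → (E3 →L[ℝ] ℝ) := fun x => ∫ s in (0:ℝ)..1, s ^ 0 • fderiv ℝ f (s • x)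
  have hΦ : ContDiff ℝ (⊤ : ℕ∞) Φ := contDiff_infty.2 fun n => contDiff_scaleInt n 0 _ hsm
  refine ⟨f 0, fun x => Φ x (Pi.single 0 1), fun x => Φ x (Pi.single 1 1),
    fun x => Φ x (Pi.single 2 1), hΦ.clm_apply contDiff_const, hΦ.clm_apply contDiff_const,
    hΦ.clm_apply contDiff_const, fun x => ?_⟩
  have h1 : Φ x x = f x - f 0 := by
    have hi : IntervalIntegrable (fun s : ℝ => s ^ 0 • fderiv ℝ f (s • x)) MeasureTheory.volume 0 1 := by
      have := hsm.continuous
      exact (by fun_prop : Continuous fun s : ℝ => s ^ 0 • fderiv ℝ f (s • x)).intervalIntegrable _ _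
    have e : Φ x x = ∫ s in (0:ℝ)..1, (s ^ 0 • fderiv ℝ f (s • x)) x :=
      ContinuousLinearMap.intervalIntegral_apply hi x
    rw [e]
    have := intervalIntegral.integral_eq_sub_of_hasDerivAt (a := 0) (b := 1)
      (f := fun s : ℝ => f (s • x)) (f' := fun s : ℝ => (s ^ 0 • fderiv ℝ f (s • x)) x) ?_ ?_
    · rw [this]; simp
    · intro s _
      have h1 : HasDerivAt (fun s : ℝ => s • x) ((1:ℝ) • x) s := (hasDerivAt_id s).smul_const x
      have h2 := ((hf.differentiable (by simp)) (s • x)).hasFDerivAt.comp_hasDerivAt s h1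
      simpa [Function.comp_def] using h2
    · have := hsm.continuous
      exact (by fun_prop : Continuous fun s : ℝ => (s ^ 0 • fderiv ℝ f (s • x)) x).intervalIntegrable _ _
  have hx : x = x 0 • (Pi.single 0 1 : E3) + x 1 • (Pi.single 1 1 : E3) + x 2 • (Pi.single 2 1 : E3) := by
    ext i; fin_cases i <;> simp
  have h2 : Φ x x = x 0 * Φ x (Pi.single 0 1) + x 1 * Φ x (Pi.single 1 1) + x 2 * Φ x (Pi.single 2 1) := by
    conv_lhs => rw [hx, map_add, map_add, map_smul, map_smul, map_smul]
    rw [← hx]; simp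
  simp only
  linarith

theorem exists_global (f : E3 → ℝ) (U : Set E3) (hU : U ∈ 𝓝 (0 : E3))
    (hf : ContDiffOn ℝ (⊤ : ℕ∞) f U) :
    ∃ F : E3 → ℝ, ContDiff ℝ (⊤ : ℕ∞) F ∧ f =ᶠ[𝓝 0] F := by
  obtain ⟨V, hVU, hVo, hV0⟩ := mem_nhds_iff.1 hU
  obtain ⟨ρ, hρ⟩ := Metric.isOpen_iff.1 hVo 0 hV0
  let b : ContDiffBump (0 : E3) := ⟨ρ/4, ρ/2, by linarith [hρ.1], by linarith [hρ.1]⟩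
  refine ⟨fun x => b x * f x, ?_, ?_⟩
  · rw [contDiff_iff_contDiffAt]
    intro x
    by_cases hx : x ∈ V
    · exact b.contDiffAt.mul (hf.contDiffAt (mem_of_superset (hVo.mem_nhds hx) hVU))
    · have hx' : x ∉ tsupport b := by
        rw [b.tsupport_eq]
        intro h
        apply hx (hρ.2 _)
        rw [Metric.mem_ball]
        have : dist x 0 ≤ ρ/2 := h
        linarith [hρ.1]
      have h0 : (fun x => b x * f x) =ᶠ[𝓝 x] fun _ => 0 := by
        have := notMem_tsupport_iff_eventuallyEq.1 hx'
        filter_upwards [this] with y hy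
        simp [hy]
      exact contDiffAt_const.congr_of_eventuallyEq h0
  · filter_upwards [b.eventuallyEq_one] with y hy
    simp [hy]

def gc (t : ℝ) : E3 := ![t^4, t^5, t^7]

@[simp] theorem gc0 (t : ℝ) : gc t 0 = t^4 := rfl
@[simp] theorem gc1 (t : ℝ) : gc t 1 = t^5 := rfl
@[simp] theorem gc2 (t : ℝ) : gc t 2 = t^7 := rfl

theorem gc_cont : Continuous gc := by
  refine continuous_pi fun i => ?_
  fin_cases i <;> simp <;> fun_prop

theorem gc_tendsto : Tendsto gc (𝓝 0) (𝓝 0) := by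
  have h := gc_cont.tendsto 0
  have : gc 0 = 0 := by ext i; fin_cases i <;> simp
  rwa [this] at h

/-- partial derivative -/
def pd (j : Fin 3) (f : E3 → ℝ) (x : E3) : ℝ := fderiv ℝ f x (Pi.single j 1)

theorem pd_add (j : Fin 3) {f g : E3 → ℝ} (hf : Differentiable ℝ f) (hg : Differentiable ℝ g) (x : E3) :
    pd j (fun x => f x + g x) x = pd j f x + pd j g x := by
  unfold pd
  rw [fderiv_fun_add (hf x) (hg x)]; rfl

theorem pd_sub (j : Fin 3) {f g : E3 → ℝ} (hf : Differentiable ℝ f) (hg : Differentiable ℝ g) (x : E3) :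
    pd j (fun x => f x - g x) x = pd j f x - pd j g x := by
  unfold pd
  rw [fderiv_fun_sub (hf x) (hg x)]; rfl

theorem pd_mul (j : Fin 3) {f g : E3 → ℝ} (hf : Differentiable ℝ f) (hg : Differentiable ℝ g) (x : E3) :
    pd j (fun x => f x * g x) x = pd j f x * g x + f x * pd j g x := by
  unfold pd
  rw [fderiv_fun_mul (hf x) (hg x)]
  simp; ring

theorem pd_pow (j : Fin 3) {f : E3 → ℝ} (hf : Differentiable ℝ f) (n : ℕ) (x : E3) :
    pd j (fun x => f x ^ n) x = n * f x ^ (n-1) * pd j f x := by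
  unfold pd
  rw [fderiv_fun_pow n (hf x)]
  simp

theorem pd_const (j : Fin 3) (c : ℝ) (x : E3) : pd j (fun _ => c) x = 0 := by
  simp [pd]

theorem pd_coord (j i : Fin 3) (x : E3) : pd j (fun x => x i) x = if i = j then 1 else 0 := by
  unfold pd
  have : HasFDerivAt (fun x : E3 => x i) (ContinuousLinearMap.proj (R := ℝ) i) x := hasFDerivAt_apply i x
  rw [this.fderiv]
  simp [Pi.single_apply]

theorem pd_congr (j : Fin 3) {f g : E3 → ℝ} {x : E3} (h : f =ᶠ[𝓝 x] g) : pd j f x = pd j g x := by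
  unfold pd; rw [h.fderiv_eq]

theorem pd_cont (j : Fin 3) {f : E3 → ℝ} (hf : ContDiff ℝ (⊤ : ℕ∞) f) : Continuous (pd j f) := by
  have : Continuous (fderiv ℝ f) := hf.continuous_fderiv (by simp)
  unfold pd
  fun_prop

theorem sm_diff {f : E3 → ℝ} (hf : ContDiff ℝ (⊤ : ℕ∞) f) : Differentiable ℝ f :=
  hf.differentiable (by simp)

/-- weighted order at least `k` -/
inductive W (k : ℕ) : (E3 → ℝ) → Prop
  | base (a b c : ℕ) (h : k ≤ 4*a+5*b+7*c) (f : E3 → ℝ) (hf : ContDiff ℝ (⊤ : ℕ∞) f) :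
      W k (fun x => x 0 ^ a * x 1 ^ b * x 2 ^ c * f x)
  | add (f g : E3 → ℝ) (hf : W k f) (hg : W k g) : W k (fun x => f x + g x)

theorem W.mono {k l : ℕ} (h : k ≤ l) {f : E3 → ℝ} (hf : W l f) : W k f := by
  induction hf with
  | base a b c h' f hf => exact .base a b c (h.trans h') f hf
  | add f g _ _ h1 h2 => exact .add _ _ h1 h2

theorem W.sm {k : ℕ} {f : E3 → ℝ} (hf : W k f) : ContDiff ℝ (⊤ : ℕ∞) f := by
  induction hf with
  | base a b c h' f hf => fun_prop
  | add f g _ _ h1 h2 => fun_prop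

theorem W.m0 {k : ℕ} {f : E3 → ℝ} (hf : W k f) : W (k+4) (fun x => x 0 * f x) := by
  induction hf with
  | base a b c h f hf =>
    have := W.base (k := k+4) (a+1) b c (by omega) f hf
    convert this using 2; ring
  | add f g _ _ h1 h2 =>
    convert W.add _ _ h1 h2 using 2; ring

theorem W.m1 {k : ℕ} {f : E3 → ℝ} (hf : W k f) : W (k+5) (fun x => x 1 * f x) := by
  induction hf with
  | base a b c h f hf =>
    have := W.base (k := k+5) a (b+1) c (by omega) f hf
    convert this using 2; ring
  | add f g _ _ h1 h2 =>
    convert W.add _ _ h1 h2 using 2; ring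

theorem W.m2 {k : ℕ} {f : E3 → ℝ} (hf : W k f) : W (k+7) (fun x => x 2 * f x) := by
  induction hf with
  | base a b c h f hf =>
    have := W.base (k := k+7) a b (c+1) (by omega) f hf
    convert this using 2; ring
  | add f g _ _ h1 h2 =>
    convert W.add _ _ h1 h2 using 2; ring

theorem W.zero {f : E3 → ℝ} (hf : ContDiff ℝ (⊤ : ℕ∞) f) : W 0 f := by
  have := W.base (k := 0) 0 0 0 (by omega) f hf
  simpa using this

/-- combine: result of order `n` -/
theorem W.comb {n p q r : ℕ} {f0 f1 f2 : E3 → ℝ} (h0 : W p f0) (h1 : W q f1) (h2 : W r f2)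
    (hp : n ≤ p + 4) (hq : n ≤ q + 5) (hr : n ≤ r + 7) :
    W n (fun x => x 0 * f0 x + x 1 * f1 x + x 2 * f2 x) :=
  .add _ _ (.add _ _ (h0.m0.mono hp) (h1.m1.mono hq)) (h2.m2.mono hr)

theorem pow_split (t : ℝ) {k n : ℕ} (h : k ≤ n) : t ^ n = t ^ k * t ^ (n - k) := by
  rw [← pow_add]; congr 1; omega

theorem W.val {k : ℕ} {f : E3 → ℝ} (hf : W k f) :
    ∃ φ : ℝ → ℝ, Continuous φ ∧ ∀ t, f (gc t) = t ^ k * φ t := by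
  induction hf with
  | base a b c h f hf =>
    refine ⟨fun t => t ^ (4*a+5*b+7*c-k) * f (gc t), ?_, fun t => ?_⟩
    · have := hf.continuous; have := gc_cont; fun_prop
    · simp only [gc0, gc1, gc2]
      rw [← mul_assoc, ← pow_split t h]; ring
  | add f g _ _ h1 h2 =>
    obtain ⟨φ, h, h'⟩ := h1
    obtain ⟨ψ, k, k'⟩ := h2
    refine ⟨fun t => φ t + ψ t, by fun_prop, fun t => ?_⟩
    simp only [h', k']; ring

def wt : Fin 3 → ℕ := ![4, 5, 7]

theorem W.der (j : Fin 3) {k : ℕ} {f : E3 → ℝ} (hf : W k f) :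
    ∃ φ : ℝ → ℝ, Continuous φ ∧ ∀ t, pd j f (gc t) = t ^ (k - wt j) * φ t := by
  induction hf with
  | base a b c h f hf =>
    have hfd := sm_diff hf
    have hfc := hf.continuous
    have hgc := gc_cont
    have hpc := pd_cont j hf
    have key : ∀ t, pd j (fun x => x 0 ^ a * x 1 ^ b * x 2 ^ c * f x) (gc t) =
        pd j (fun x => x 0 ^ a * x 1 ^ b * x 2 ^ c) (gc t) * f (gc t)
          + t ^ (4*a+5*b+7*c) * pd j f (gc t) := by
      intro t
      rw [pd_mul j (by fun_prop) hfd]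
      simp only [gc0, gc1, gc2]; ring
    have key2 : ∃ C : ℝ, ∀ t, pd j (fun x => x 0 ^ a * x 1 ^ b * x 2 ^ c) (gc t)
        = t ^ (k - wt j) * (C * t ^ (4*a+5*b+7*c - wt j - (k - wt j))) := by
      have e : ∀ t, pd j (fun x => x 0 ^ a * x 1 ^ b * x 2 ^ c) (gc t) =
          (a * (t^4)^(a-1) * pd j (fun x => x 0) (gc t) * (t^5)^b +
            (t^4)^a * (b * (t^5)^(b-1) * pd j (fun x => x 1) (gc t))) * (t^7)^c +
            (t^4)^a * (t^5)^b * (c * (t^7)^(c-1) * pd j (fun x => x 2) (gc t)) := by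
        intro t
        rw [pd_mul j (by fun_prop) (by fun_prop), pd_mul j (by fun_prop) (by fun_prop),
          pd_pow j (by fun_prop), pd_pow j (by fun_prop), pd_pow j (by fun_prop)]
        simp only [gc0, gc1, gc2]
      simp only [e, pd_coord]
      fin_cases j
      · refine ⟨a, fun t => ?_⟩
        rcases a with _ | a
        · simp
        · have hp : t ^ (k - 4) * (((a+1 : ℕ):ℝ) * t ^ (4*(a+1)+5*b+7*c - 4 - (k - 4)))
              = ((a+1 : ℕ):ℝ) * t ^ (4*a+5*b+7*c) := by
            rw [mul_left_comm, ← pow_add]; congr 2; omega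
          refine Eq.trans ?_ hp.symm
          simp; ring
      · refine ⟨b, fun t => ?_⟩
        rcases b with _ | b
        · simp
        · have hp : t ^ (k - 5) * (((b+1 : ℕ):ℝ) * t ^ (4*a+5*(b+1)+7*c - 5 - (k - 5)))
              = ((b+1 : ℕ):ℝ) * t ^ (4*a+5*b+7*c) := by
            rw [mul_left_comm, ← pow_add]; congr 2; omega
          refine Eq.trans ?_ hp.symm
          simp; ring
      · refine ⟨c, fun t => ?_⟩
        rcases c with _ | c
        · simp
        · have hp : t ^ (k - 7) * (((c+1 : ℕ):ℝ) * t ^ (4*a+5*b+7*(c+1) - 7 - (k - 7)))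
              = ((c+1 : ℕ):ℝ) * t ^ (4*a+5*b+7*c) := by
            rw [mul_left_comm, ← pow_add]; congr 2; omega
          refine Eq.trans ?_ hp.symm
          simp; ring
    obtain ⟨C, hC⟩ := key2
    refine ⟨fun t => C * t ^ (4*a+5*b+7*c - wt j - (k - wt j)) * f (gc t) +
      t ^ (4*a+5*b+7*c - (k - wt j)) * pd j f (gc t), by fun_prop, fun t => ?_⟩
    rw [key, hC, pow_split t (show k - wt j ≤ 4*a+5*b+7*c by omega)]
    ring
  | add f g hf hg h1 h2 =>
    obtain ⟨φ, h, h'⟩ := h1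
    obtain ⟨ψ, k, k'⟩ := h2
    refine ⟨fun t => φ t + ψ t, by fun_prop, fun t => ?_⟩
    rw [pd_add j (sm_diff hf.sm) (sm_diff hg.sm), h', k']; ring

theorem T4 (f : E3 → ℝ) (hf : ContDiff ℝ (⊤ : ℕ∞) f) :
    ∃ (c : ℝ) (r : E3 → ℝ), W 4 r ∧ ∀ x, f x = c + r x := by
  obtain ⟨c, f0, f1, f2, h0, h1, h2, h⟩ := hadamard3 f hf
  refine ⟨c, _, W.comb (W.zero h0) (W.zero h1) (W.zero h2) (by norm_num) (by norm_num) (by norm_num), fun x => ?_⟩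
  rw [h]; ring

theorem T5 (f : E3 → ℝ) (hf : ContDiff ℝ (⊤ : ℕ∞) f) :
    ∃ (c c4 : ℝ) (r : E3 → ℝ), W 5 r ∧ ∀ x, f x = c + c4 * x 0 + r x := by
  obtain ⟨c, f0, f1, f2, h0, h1, h2, h⟩ := hadamard3 f hf
  obtain ⟨a, r0, k0, e0⟩ := T4 f0 h0
  refine ⟨c, a, _, W.comb k0 (W.zero h1) (W.zero h2) (by norm_num) (by norm_num) (by norm_num), fun x => ?_⟩
  rw [h, e0]; ring

theorem T8 (f : E3 → ℝ) (hf : ContDiff ℝ (⊤ : ℕ∞) f) :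
    ∃ (c c4 c5 c7 : ℝ) (r : E3 → ℝ), W 8 r ∧ ∀ x, f x = c + c4 * x 0 + c5 * x 1 + c7 * x 2 + r x := by
  obtain ⟨c, f0, f1, f2, h0, h1, h2, h⟩ := hadamard3 f hf
  obtain ⟨a, r0, k0, e0⟩ := T4 f0 h0
  obtain ⟨b, r1, k1, e1⟩ := T4 f1 h1
  obtain ⟨d, r2, k2, e2⟩ := T4 f2 h2
  refine ⟨c, a, b, d, _, W.comb k0 k1 k2 (by norm_num) (by norm_num) (by norm_num), fun x => ?_⟩
  rw [h, e0, e1, e2]; ring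

theorem T12 (f : E3 → ℝ) (hf : ContDiff ℝ (⊤ : ℕ∞) f) :
    ∃ (c c4 c5 c7 c8 c9 c10 c11 : ℝ) (r : E3 → ℝ), W 12 r ∧
      ∀ x, f x = c + c4 * x 0 + c5 * x 1 + c7 * x 2 + c8 * x 0 ^ 2 + c9 * (x 0 * x 1)
        + c10 * x 1 ^ 2 + c11 * (x 0 * x 2) + r x := by
  obtain ⟨c, f0, f1, f2, h0, h1, h2, h⟩ := hadamard3 f hf
  obtain ⟨a, a4, a5, a7, r0, k0, e0⟩ := T8 f0 h0
  obtain ⟨b, b4, b5, b7, r1, k1, e1⟩ := T8 f1 h1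
  obtain ⟨d, d4, r2, k2, e2⟩ := T5 f2 h2
  refine ⟨c, a, b, d, a4, a5 + b4, b5, a7 + d4, _,
    W.add _ _ (W.comb k0 k1 k2 (by norm_num) (by norm_num) (by norm_num))
      (W.base 0 1 1 (by norm_num) (fun _ => b7) contDiff_const), fun x => ?_⟩
  rw [h, e0, e1, e2]; ring

theorem T15 (f : E3 → ℝ) (hf : ContDiff ℝ (⊤ : ℕ∞) f) :
    ∃ (c c4 c5 c7 c8 c9 c10 c11 c12 d12 c13 c14 d14 : ℝ) (r : E3 → ℝ), W 15 r ∧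
      ∀ x, f x = c + c4 * x 0 + c5 * x 1 + c7 * x 2 + c8 * x 0 ^ 2 + c9 * (x 0 * x 1)
        + c10 * x 1 ^ 2 + c11 * (x 0 * x 2) + c12 * x 0 ^ 3 + d12 * (x 1 * x 2)
        + c13 * (x 0 ^ 2 * x 1) + c14 * (x 0 * x 1 ^ 2) + d14 * x 2 ^ 2 + r x := by
  obtain ⟨c, f0, f1, f2, h0, h1, h2, h⟩ := hadamard3 f hf
  obtain ⟨a, a4, a5, a7, a8, a9, a10, a11, r0, k0, e0⟩ := T12 f0 h0
  obtain ⟨b, b4, b5, b7, b8, b9, b10, b11, r1, k1, e1⟩ := T12 f1 h1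
  obtain ⟨d, d4, d5, d7, r2, k2, e2⟩ := T8 f2 h2
  refine ⟨c, a, b, d, a4, a5 + b4, b5, a7 + d4, a8, b7 + d5, a9 + b8, a10 + b9, d7, _,
    W.add _ _ (W.add _ _ (W.comb k0 k1 k2 (by norm_num) (by norm_num) (by norm_num))
      (W.base 0 3 0 (by norm_num) (fun _ => b10) contDiff_const))
      (W.add _ _ (W.base 2 0 1 (by norm_num) (fun _ => a11) contDiff_const)
      (W.base 1 1 1 (by norm_num) (fun _ => b11) contDiff_const)), fun x => ?_⟩
  rw [h, e0, e1, e2]; ring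

theorem ev_div (φ : ℝ → ℝ) (hφ : Continuous φ) (h : ∀ᶠ t in 𝓝 (0:ℝ), t * φ t = 0) :
    ∀ᶠ t in 𝓝 (0:ℝ), φ t = 0 := by
  have h1 : ∀ᶠ t in 𝓝[≠] (0:ℝ), φ t = 0 := by
    filter_upwards [h.filter_mono nhdsWithin_le_nhds, self_mem_nhdsWithin] with t ht ht0
    exact (mul_eq_zero.1 ht).resolve_left ht0
  have h2 : φ 0 = 0 := by
    have a : Tendsto φ (𝓝[≠] 0) (𝓝 (φ 0)) := hφ.continuousAt.tendsto.mono_left nhdsWithin_le_nhds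
    have b : Tendsto φ (𝓝[≠] 0) (𝓝 0) := tendsto_const_nhds.congr' (h1.mono fun t ht => ht.symm)
    exact tendsto_nhds_unique a b
  rw [eventually_nhdsWithin_iff] at h1
  filter_upwards [h1] with t ht
  by_cases h0 : t = 0
  · rw [h0, h2]
  · exact ht h0

theorem coeffs_zero (n : ℕ) : ∀ (a : ℕ → ℝ) (φ : ℝ → ℝ), Continuous φ →
    (∀ᶠ t in 𝓝 (0:ℝ), ∑ i ∈ Finset.range n, a i * t ^ i + t ^ n * φ t = 0) →
    ∀ i < n, a i = 0 := by
  induction n with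
  | zero => intro a φ _ _ i hi; omega
  | succ n ih =>
    intro a φ hφ h
    have h0 : a 0 = 0 := by
      have := h.self_of_nhds
      simpa [Finset.sum_range_succ'] using this
    have h1 := ev_div (fun t => ∑ i ∈ Finset.range n, a (i+1) * t ^ i + t ^ n * φ t) (by fun_prop)
      (by
        filter_upwards [h] with t ht
        rw [Finset.sum_range_succ', h0] at ht
        rw [← ht, mul_add, Finset.mul_sum, pow_zero, zero_mul, add_zero]
        congr 1
        · exact Finset.sum_congr rfl fun i _ => by ring
        · ring)
    have h2 := ih (fun i => a (i+1)) φ hφ h1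
    intro i hi
    rcases i with _ | i
    · exact h0
    · exact h2 i (by omega)

def InM (p q r : ℝ → ℝ) : Prop :=
  ∃ h0 h1 h2 : E3 → ℝ, ContDiff ℝ (⊤ : ℕ∞) h0 ∧ ContDiff ℝ (⊤ : ℕ∞) h1 ∧ ContDiff ℝ (⊤ : ℕ∞) h2 ∧
    (∀ t, h0 (gc t) = 0) ∧ (∀ t, h1 (gc t) = 0) ∧ (∀ t, h2 (gc t) = 0) ∧
    (∀ t, p t = pd 0 h1 (gc t) - pd 1 h0 (gc t)) ∧
    (∀ t, q t = pd 0 h2 (gc t) - pd 2 h0 (gc t)) ∧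
    (∀ t, r t = pd 1 h2 (gc t) - pd 2 h1 (gc t))

theorem InM.of_eq {p q r p' q' r' : ℝ → ℝ} (h : InM p q r) (hp : ∀ t, p' t = p t)
    (hq : ∀ t, q' t = q t) (hr : ∀ t, r' t = r t) : InM p' q' r' := by
  rw [show p' = p from funext hp, show q' = q from funext hq, show r' = r from funext hr]
  exact h

theorem InM.add {p q r p' q' r' : ℝ → ℝ} (h : InM p q r) (h' : InM p' q' r') :
    InM (fun t => p t + p' t) (fun t => q t + q' t) (fun t => r t + r' t) := by
  obtain ⟨h0, h1, h2, s0, s1, s2, z0, z1, z2, hp, hq, hr⟩ := h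
  obtain ⟨k0, k1, k2, s0', s1', s2', z0', z1', z2', hp', hq', hr'⟩ := h'
  have := sm_diff s0
  have := sm_diff s1
  have := sm_diff s2
  have := sm_diff s0'
  have := sm_diff s1'
  have := sm_diff s2'
  refine ⟨fun x => h0 x + k0 x, fun x => h1 x + k1 x, fun x => h2 x + k2 x, by fun_prop, by fun_prop,
    by fun_prop, fun t => by simp [z0, z0'], fun t => by simp [z1, z1'], fun t => by simp [z2, z2'],
    fun t => ?_, fun t => ?_, fun t => ?_⟩
  · simp (disch := fun_prop) only [pd_add, hp, hp']; ring
  · simp (disch := fun_prop) only [pd_add, hq, hq']; ring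
  · simp (disch := fun_prop) only [pd_add, hr, hr']; ring

theorem InM.smul {p q r : ℝ → ℝ} (h : InM p q r) (f : E3 → ℝ) (hf : ContDiff ℝ (⊤ : ℕ∞) f) :
    InM (fun t => f (gc t) * p t) (fun t => f (gc t) * q t) (fun t => f (gc t) * r t) := by
  obtain ⟨h0, h1, h2, s0, s1, s2, z0, z1, z2, hp, hq, hr⟩ := h
  have := sm_diff s0
  have := sm_diff s1
  have := sm_diff s2
  have := sm_diff hf
  refine ⟨fun x => f x * h0 x, fun x => f x * h1 x, fun x => f x * h2 x, by fun_prop, by fun_prop,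
    by fun_prop, fun t => by simp [z0], fun t => by simp [z1], fun t => by simp [z2],
    fun t => ?_, fun t => ?_, fun t => ?_⟩
  · simp (disch := fun_prop) only [pd_mul, hp, z0, z1, z2]; ring
  · simp (disch := fun_prop) only [pd_mul, hq, z0, z1, z2]; ring
  · simp (disch := fun_prop) only [pd_mul, hr, z0, z1, z2]; ring

theorem InM.slot0 (h : E3 → ℝ) (hs : ContDiff ℝ (⊤ : ℕ∞) h) (hz : ∀ t, h (gc t) = 0) :
    InM (fun t => - pd 1 h (gc t)) (fun t => - pd 2 h (gc t)) (fun _ => 0) :=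
  ⟨h, fun _ => 0, fun _ => 0, hs, contDiff_const, contDiff_const, hz, fun _ => rfl, fun _ => rfl,
    fun t => by simp [pd_const], fun t => by simp [pd_const], fun t => by simp [pd_const]⟩

theorem InM.slot1 (h : E3 → ℝ) (hs : ContDiff ℝ (⊤ : ℕ∞) h) (hz : ∀ t, h (gc t) = 0) :
    InM (fun t => pd 0 h (gc t)) (fun _ => 0) (fun t => - pd 2 h (gc t)) :=
  ⟨fun _ => 0, h, fun _ => 0, contDiff_const, hs, contDiff_const, fun _ => rfl, hz, fun _ => rfl,
    fun t => by simp [pd_const], fun t => by simp [pd_const], fun t => by simp [pd_const]⟩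

theorem InM.slot2 (h : E3 → ℝ) (hs : ContDiff ℝ (⊤ : ℕ∞) h) (hz : ∀ t, h (gc t) = 0) :
    InM (fun _ => 0) (fun t => pd 0 h (gc t)) (fun t => pd 1 h (gc t)) :=
  ⟨fun _ => 0, fun _ => 0, h, contDiff_const, contDiff_const, hs, fun _ => rfl, fun _ => rfl, hz,
    fun t => by simp [pd_const], fun t => by simp [pd_const], fun t => by simp [pd_const]⟩

def Fa (x : E3) : ℝ := x 0 ^ 3 - x 1 * x 2
def Fb (x : E3) : ℝ := x 0 * x 1 ^ 2 - x 2 ^ 2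
def Fc (x : E3) : ℝ := x 1 ^ 3 - x 0 ^ 2 * x 2

theorem Fa_sm : ContDiff ℝ (⊤ : ℕ∞) Fa := by unfold Fa; fun_prop
theorem Fb_sm : ContDiff ℝ (⊤ : ℕ∞) Fb := by unfold Fb; fun_prop
theorem Fc_sm : ContDiff ℝ (⊤ : ℕ∞) Fc := by unfold Fc; fun_prop
theorem Fa_z (t : ℝ) : Fa (gc t) = 0 := by simp [Fa]; ring
theorem Fb_z (t : ℝ) : Fb (gc t) = 0 := by simp [Fb]; ring
theorem Fc_z (t : ℝ) : Fc (gc t) = 0 := by simp [Fc]; ring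

theorem Fa_pd (t : ℝ) : pd 0 Fa (gc t) = 3 * t ^ 8 ∧ pd 1 Fa (gc t) = - t ^ 7 ∧ pd 2 Fa (gc t) = - t ^ 5 := by
  unfold Fa
  simp (disch := fun_prop) only [pd_sub, pd_mul, pd_pow, pd_coord]
  refine ⟨?_, ?_, ?_⟩ <;> simp <;> ring

theorem Fb_pd (t : ℝ) : pd 0 Fb (gc t) = t ^ 10 ∧ pd 1 Fb (gc t) = 2 * t ^ 9 ∧ pd 2 Fb (gc t) = - 2 * t ^ 7 := by
  unfold Fb
  simp (disch := fun_prop) only [pd_sub, pd_mul, pd_pow, pd_coord]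
  refine ⟨?_, ?_, ?_⟩ <;> simp <;> ring

theorem Fc_pd (t : ℝ) : pd 0 Fc (gc t) = - 2 * t ^ 11 ∧ pd 1 Fc (gc t) = 3 * t ^ 10 ∧ pd 2 Fc (gc t) = - t ^ 8 := by
  unfold Fc
  simp (disch := fun_prop) only [pd_sub, pd_mul, pd_pow, pd_coord]
  refine ⟨?_, ?_, ?_⟩ <;> simp <;> ring

theorem gen_a1 : InM (fun t => t ^ 7) (fun t => t ^ 5) (fun _ => 0) :=
  (InM.slot0 Fa Fa_sm Fa_z).of_eq (fun t => by simp [Fa_pd]) (fun t => by simp [Fa_pd]) (fun _ => rfl)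
theorem gen_a2 : InM (fun t => 3 * t ^ 8) (fun _ => 0) (fun t => t ^ 5) :=
  (InM.slot1 Fa Fa_sm Fa_z).of_eq (fun t => by simp [Fa_pd]) (fun _ => rfl) (fun t => by simp [Fa_pd])
theorem gen_a3 : InM (fun _ => 0) (fun t => 3 * t ^ 8) (fun t => - t ^ 7) :=
  (InM.slot2 Fa Fa_sm Fa_z).of_eq (fun _ => rfl) (fun t => by simp [Fa_pd]) (fun t => by simp [Fa_pd])
theorem gen_b1 : InM (fun t => - (2 * t ^ 9)) (fun t => 2 * t ^ 7) (fun _ => 0) :=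
  (InM.slot0 Fb Fb_sm Fb_z).of_eq (fun t => by simp [Fb_pd]) (fun t => by simp [Fb_pd]) (fun _ => rfl)
theorem gen_b2 : InM (fun t => t ^ 10) (fun _ => 0) (fun t => 2 * t ^ 7) :=
  (InM.slot1 Fb Fb_sm Fb_z).of_eq (fun t => by simp [Fb_pd]) (fun _ => rfl) (fun t => by simp [Fb_pd])
theorem gen_b3 : InM (fun _ => 0) (fun t => t ^ 10) (fun t => 2 * t ^ 9) :=
  (InM.slot2 Fb Fb_sm Fb_z).of_eq (fun _ => rfl) (fun t => by simp [Fb_pd]) (fun t => by simp [Fb_pd])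
theorem gen_e1 : InM (fun t => - (3 * t ^ 10)) (fun t => t ^ 8) (fun _ => 0) :=
  (InM.slot0 Fc Fc_sm Fc_z).of_eq (fun t => by simp [Fc_pd]) (fun t => by simp [Fc_pd]) (fun _ => rfl)
theorem gen_e2 : InM (fun t => - (2 * t ^ 11)) (fun _ => 0) (fun t => t ^ 8) :=
  (InM.slot1 Fc Fc_sm Fc_z).of_eq (fun t => by simp [Fc_pd]) (fun _ => rfl) (fun t => by simp [Fc_pd])
theorem gen_e3 : InM (fun _ => 0) (fun t => - (2 * t ^ 11)) (fun t => 3 * t ^ 10) :=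
  (InM.slot2 Fc Fc_sm Fc_z).of_eq (fun _ => rfl) (fun t => by simp [Fc_pd]) (fun t => by simp [Fc_pd])

theorem E12_19 : InM (fun t => t ^ 10) (fun _ => 0) (fun _ => 0) := by
  refine (((gen_a3.smul (fun x => ((2:ℝ)/19) * (1:ℝ)) (by fun_prop)).add
    (gen_b2.smul (fun x => ((1:ℝ)/19) * (1:ℝ)) (by fun_prop))).add
    (gen_e1.smul (fun x => ((-6:ℝ)/19) * (1:ℝ)) (by fun_prop))).of_eq ?_ ?_ ?_ <;> intro t <;> simp <;> ring

theorem E13_19 : InM (fun _ => 0) (fun t => t ^ 8) (fun _ => 0) := by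
  refine (((gen_a3.smul (fun x => ((6:ℝ)/19) * (1:ℝ)) (by fun_prop)).add
    (gen_b2.smul (fun x => ((3:ℝ)/19) * (1:ℝ)) (by fun_prop))).add
    (gen_e1.smul (fun x => ((1:ℝ)/19) * (1:ℝ)) (by fun_prop))).of_eq ?_ ?_ ?_ <;> intro t <;> simp <;> ring

theorem E23_19 : InM (fun _ => 0) (fun _ => 0) (fun t => t ^ 7) := by
  refine (((gen_a3.smul (fun x => ((-1:ℝ)/19) * (1:ℝ)) (by fun_prop)).add
    (gen_b2.smul (fun x => ((9:ℝ)/19) * (1:ℝ)) (by fun_prop))).add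
    (gen_e1.smul (fun x => ((3:ℝ)/19) * (1:ℝ)) (by fun_prop))).of_eq ?_ ?_ ?_ <;> intro t <;> simp <;> ring

theorem E12_21 : InM (fun t => t ^ 12) (fun _ => 0) (fun _ => 0) := by
  refine (((gen_b3.smul (fun x => ((-1:ℝ)/7) * (1:ℝ)) (by fun_prop)).add
    (gen_a2.smul (fun x => ((2:ℝ)/7) * x 0) (by fun_prop))).add
    (gen_a1.smul (fun x => ((1:ℝ)/7) * x 1) (by fun_prop))).of_eq ?_ ?_ ?_ <;> intro t <;> simp <;> ring

theorem E13_21 : InM (fun _ => 0) (fun t => t ^ 10) (fun _ => 0) := by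
  refine (((gen_b3.smul (fun x => ((1:ℝ)/7) * (1:ℝ)) (by fun_prop)).add
    (gen_a2.smul (fun x => ((-2:ℝ)/7) * x 0) (by fun_prop))).add
    (gen_a1.smul (fun x => ((6:ℝ)/7) * x 1) (by fun_prop))).of_eq ?_ ?_ ?_ <;> intro t <;> simp <;> ring

theorem E23_21 : InM (fun _ => 0) (fun _ => 0) (fun t => t ^ 9) := by
  refine (((gen_b3.smul (fun x => ((3:ℝ)/7) * (1:ℝ)) (by fun_prop)).add
    (gen_a2.smul (fun x => ((1:ℝ)/7) * x 0) (by fun_prop))).add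
    (gen_a1.smul (fun x => ((-3:ℝ)/7) * x 1) (by fun_prop))).of_eq ?_ ?_ ?_ <;> intro t <;> simp <;> ring

theorem E12_22 : InM (fun t => t ^ 13) (fun _ => 0) (fun _ => 0) := by
  refine (((gen_e3.smul (fun x => ((-1:ℝ)/11) * (1:ℝ)) (by fun_prop)).add
    (gen_b1.smul (fun x => ((-1:ℝ)/11) * x 0) (by fun_prop))).add
    (gen_a2.smul (fun x => ((3:ℝ)/11) * x 1) (by fun_prop))).of_eq ?_ ?_ ?_ <;> intro t <;> simp <;> ring

theorem E13_22 : InM (fun _ => 0) (fun t => t ^ 11) (fun _ => 0) := by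
  refine (((gen_e3.smul (fun x => ((-1:ℝ)/11) * (1:ℝ)) (by fun_prop)).add
    (gen_b1.smul (fun x => ((9:ℝ)/22) * x 0) (by fun_prop))).add
    (gen_a2.smul (fun x => ((3:ℝ)/11) * x 1) (by fun_prop))).of_eq ?_ ?_ ?_ <;> intro t <;> simp <;> ring

theorem E23_22 : InM (fun _ => 0) (fun _ => 0) (fun t => t ^ 10) := by
  refine (((gen_e3.smul (fun x => ((3:ℝ)/11) * (1:ℝ)) (by fun_prop)).add
    (gen_b1.smul (fun x => ((3:ℝ)/11) * x 0) (by fun_prop))).add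
    (gen_a2.smul (fun x => ((2:ℝ)/11) * x 1) (by fun_prop))).of_eq ?_ ?_ ?_ <;> intro t <;> simp <;> ring

theorem E12_23 : InM (fun t => t ^ 14) (fun _ => 0) (fun _ => 0) := by
  refine (((gen_a1.smul (fun x => ((6:ℝ)/5) * x 2) (by fun_prop)).add
    (gen_a3.smul (fun x => ((-2:ℝ)/5) * x 0) (by fun_prop))).add
    (gen_b2.smul (fun x => ((-1:ℝ)/5) * x 0) (by fun_prop))).of_eq ?_ ?_ ?_ <;> intro t <;> simp <;> ring

theorem E13_23 : InM (fun _ => 0) (fun t => t ^ 12) (fun _ => 0) := by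
  refine (((gen_a1.smul (fun x => ((-1:ℝ)/5) * x 2) (by fun_prop)).add
    (gen_a3.smul (fun x => ((2:ℝ)/5) * x 0) (by fun_prop))).add
    (gen_b2.smul (fun x => ((1:ℝ)/5) * x 0) (by fun_prop))).of_eq ?_ ?_ ?_ <;> intro t <;> simp <;> ring

theorem E23_23 : InM (fun _ => 0) (fun _ => 0) (fun t => t ^ 11) := by
  refine (((gen_a1.smul (fun x => ((-3:ℝ)/5) * x 2) (by fun_prop)).add
    (gen_a3.smul (fun x => ((1:ℝ)/5) * x 0) (by fun_prop))).add
    (gen_b2.smul (fun x => ((3:ℝ)/5) * x 0) (by fun_prop))).of_eq ?_ ?_ ?_ <;> intro t <;> simp <;> ring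

theorem E12_24 : InM (fun t => t ^ 15) (fun _ => 0) (fun _ => 0) := by
  refine (((gen_e2.smul (fun x => ((-1:ℝ)/5) * x 0) (by fun_prop)).add
    (gen_a1.smul (fun x => ((0:ℝ)/1) * x 0 ^ 2) (by fun_prop))).add
    (gen_a2.smul (fun x => ((1:ℝ)/5) * x 2) (by fun_prop))).of_eq ?_ ?_ ?_ <;> intro t <;> simp <;> ring

theorem E13_24 : InM (fun _ => 0) (fun t => t ^ 13) (fun _ => 0) := by
  refine (((gen_e2.smul (fun x => ((1:ℝ)/5) * x 0) (by fun_prop)).add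
    (gen_a1.smul (fun x => ((1:ℝ)/1) * x 0 ^ 2) (by fun_prop))).add
    (gen_a2.smul (fun x => ((-1:ℝ)/5) * x 2) (by fun_prop))).of_eq ?_ ?_ ?_ <;> intro t <;> simp <;> ring

theorem E23_24 : InM (fun _ => 0) (fun _ => 0) (fun t => t ^ 12) := by
  refine (((gen_e2.smul (fun x => ((3:ℝ)/5) * x 0) (by fun_prop)).add
    (gen_a1.smul (fun x => ((0:ℝ)/1) * x 0 ^ 2) (by fun_prop))).add
    (gen_a2.smul (fun x => ((2:ℝ)/5) * x 2) (by fun_prop))).of_eq ?_ ?_ ?_ <;> intro t <;> simp <;> ring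

theorem E12 (n : ℕ) : InM (fun t => t ^ (n+12)) (fun _ => 0) (fun _ => 0) := by
  induction n using Nat.strong_induction_on with
  | _ n ih =>
    rcases n with _ | _ | _ | _ | n
    · exact E12_21
    · exact E12_22
    · exact E12_23
    · exact E12_24
    · refine ((ih n (by omega)).smul (fun x => x 0) (by fun_prop)).of_eq ?_ ?_ ?_ <;>
        intro t <;> simp <;> ring

theorem E13 (n : ℕ) : InM (fun _ => 0) (fun t => t ^ (n+10)) (fun _ => 0) := by
  induction n using Nat.strong_induction_on with
  | _ n ih =>
    rcases n with _ | _ | _ | _ | n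
    · exact E13_21
    · exact E13_22
    · exact E13_23
    · exact E13_24
    · refine ((ih n (by omega)).smul (fun x => x 0) (by fun_prop)).of_eq ?_ ?_ ?_ <;>
        intro t <;> simp <;> ring

theorem E23 (n : ℕ) : InM (fun _ => 0) (fun _ => 0) (fun t => t ^ (n+9)) := by
  induction n using Nat.strong_induction_on with
  | _ n ih =>
    rcases n with _ | _ | _ | _ | n
    · exact E23_21
    · exact E23_22
    · exact E23_23
    · exact E23_24
    · refine ((ih n (by omega)).smul (fun x => x 0) (by fun_prop)).of_eq ?_ ?_ ?_ <;>
        intro t <;> simp <;> ring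

theorem W.in12 {r : E3 → ℝ} (hr : W 12 r) : InM (fun t => r (gc t)) (fun _ => 0) (fun _ => 0) := by
  induction hr with
  | base a b c h f hf =>
    refine ((E12 (4*a+5*b+7*c-12)).smul f hf).of_eq (fun t => ?_) (fun t => by simp) (fun t => by simp)
    rw [Nat.sub_add_cancel h]; simp only [gc0, gc1, gc2]; ring
  | add f g _ _ h1 h2 =>
    exact (h1.add h2).of_eq (fun _ => rfl) (fun t => by simp) (fun t => by simp)

theorem W.in13 {r : E3 → ℝ} (hr : W 12 r) : InM (fun _ => 0) (fun t => r (gc t)) (fun _ => 0) := by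
  induction hr with
  | base a b c h f hf =>
    refine ((E13 (4*a+5*b+7*c-10)).smul f hf).of_eq (fun t => by simp) (fun t => ?_) (fun t => by simp)
    rw [Nat.sub_add_cancel (by omega)]; simp only [gc0, gc1, gc2]; ring
  | add f g _ _ h1 h2 =>
    exact (h1.add h2).of_eq (fun t => by simp) (fun _ => rfl) (fun t => by simp)

theorem W.in23 {r : E3 → ℝ} (hr : W 12 r) : InM (fun _ => 0) (fun _ => 0) (fun t => r (gc t)) := by
  induction hr with
  | base a b c h f hf =>
    refine ((E23 (4*a+5*b+7*c-9)).smul f hf).of_eq (fun t => by simp) (fun t => by simp) (fun t => ?_)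
    rw [Nat.sub_add_cancel (by omega)]; simp only [gc0, gc1, gc2]; ring
  | add f g _ _ h1 h2 =>
    exact (h1.add h2).of_eq (fun t => by simp) (fun t => by simp) (fun _ => rfl)

/-- constant multiple -/
theorem InM.cm {p q r : ℝ → ℝ} (h : InM p q r) (c : ℝ) :
    InM (fun t => c * p t) (fun t => c * q t) (fun t => c * r t) :=
  h.smul (fun _ => c) contDiff_const

theorem existence_core (P Q R : E3 → ℝ) (hP : ContDiff ℝ (⊤ : ℕ∞) P) (hQ : ContDiff ℝ (⊤ : ℕ∞) Q)
    (hR : ContDiff ℝ (⊤ : ℕ∞) R)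
    (hcl : ∀ᶠ t in 𝓝 (0:ℝ), pd 2 P (gc t) - pd 1 Q (gc t) + pd 0 R (gc t) = 0) :
    ∃ c : Fin 9 → ℝ, InM
      (fun t => P (gc t) - (c 0 + c 3 * t ^ 4 + c 4 * t ^ 5))
      (fun t => Q (gc t) - (c 1 + c 5 * t ^ 4 + c 6 * t ^ 5 + c 8 * t ^ 7))
      (fun t => R (gc t) - (c 2 + c 6 * t ^ 4 + c 7 * t ^ 5)) := by
  obtain ⟨A0, A4, A5, A7, A8, A9, A10, A11, rA, wA, eA⟩ := T12 P hP
  obtain ⟨B0, B4, B5, B7, B8, B9, B10, B11, rB, wB, eB⟩ := T12 Q hQ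
  obtain ⟨C0, C4, C5, C7, C8, C9, C10, C11, rC, wC, eC⟩ := T12 R hR
  obtain ⟨φA, cA, dA⟩ := wA.der 2
  obtain ⟨φB, cB, dB⟩ := wB.der 1
  obtain ⟨φC, cC, dC⟩ := wC.der 0
  have hA := sm_diff wA.sm
  have hB := sm_diff wB.sm
  have hC := sm_diff wC.sm
  have pA : ∀ t, pd 2 P (gc t) = A7 + A11 * t ^ 4 + t ^ 5 * φA t := by
    intro t
    rw [show P = _ from funext eA]
    simp (disch := fun_prop) only [pd_add, pd_mul, pd_pow, pd_coord, pd_const, dA]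
    simp [wt]
  have pB : ∀ t, pd 1 Q (gc t) = B5 + B9 * t ^ 4 + 2 * B10 * t ^ 5 + t ^ 7 * φB t := by
    intro t
    rw [show Q = _ from funext eB]
    simp (disch := fun_prop) only [pd_add, pd_mul, pd_pow, pd_coord, pd_const, dB]
    simp [wt]; ring
  have pC : ∀ t, pd 0 R (gc t) = C4 + 2 * C8 * t ^ 4 + C9 * t ^ 5 + C11 * t ^ 7 + t ^ 8 * φC t := by
    intro t
    rw [show R = _ from funext eC]
    simp (disch := fun_prop) only [pd_add, pd_mul, pd_pow, pd_coord, pd_const, dC]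
    simp [wt]; ring
  have hz := coeffs_zero 5 (fun i => [A7 - B5 + C4, 0, 0, 0, A11 - B9 + 2 * C8].getD i 0)
    (fun t => φA t - 2 * B10 - t ^ 2 * φB t + C9 + C11 * t ^ 2 + t ^ 3 * φC t) (by fun_prop) (by
      filter_upwards [hcl] with t ht
      rw [pA, pB, pC] at ht
      simp [Finset.sum_range_succ]
      linear_combination ht)
  have h1 : A7 - B5 + C4 = 0 := by simpa using hz 0 (by norm_num)
  have h2 : A11 - B9 + 2 * C8 = 0 := by simpa using hz 4 (by norm_num)
  refine ⟨![A0, B0, C0, A4, A5, B4, C4, C5 - A8/3, B7 + A9], ?_⟩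
  have hB5 : B5 = A7 + C4 := by linarith
  have hA11 : A11 = B9 - 2 * C8 := by linarith
  subst hB5 hA11
  refine (((((gen_a1.cm A7).add (gen_a2.cm (A8/3))).add (gen_b1.cm (-A9/2))).add
    (((E12_19.cm A10).add (E13_19.cm B8)).add (E23_19.cm C7))).add
    (((gen_e2.cm C8).add (gen_a1.smul (fun x => B9 * x 0) (by fun_prop))).add
     ((((E13 0).cm B10).add ((E13 1).cm B11)).add
      ((((E23 0).cm C9).add ((E23 1).cm C10)).add ((E23 2).cm C11))))).add
    ((wA.in12.add wB.in13).add wC.in23) |>.of_eq ?_ ?_ ?_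
  · intro t; rw [eA]; simp; ring
  · intro t; rw [eB]; simp; ring
  · intro t; rw [eC]; simp; ring

theorem uniq_core (H : E3 → ℝ) (hH : ContDiff ℝ (⊤ : ℕ∞) H) (hz : ∀ᶠ t in 𝓝 (0:ℝ), H (gc t) = 0) :
    ∃ (a b : ℝ) (k0 k1 k2 : ℝ → ℝ), Continuous k0 ∧ Continuous k1 ∧ Continuous k2 ∧
      (∀ t, pd 0 H (gc t) = 3 * a * t ^ 8 + t ^ 10 * k0 t) ∧
      (∀ t, pd 1 H (gc t) = - a * t ^ 7 + 2 * b * t ^ 9 + t ^ 10 * k1 t) ∧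
      (∀ t, pd 2 H (gc t) = - a * t ^ 5 - 2 * b * t ^ 7 + t ^ 8 * k2 t) := by
  obtain ⟨c, c4, c5, c7, c8, c9, c10, c11, c12, d12, c13, c14, d14, r, wr, er⟩ := T15 H hH
  obtain ⟨φ, hφ, eφ⟩ := wr.val
  obtain ⟨φ0, hφ0, eφ0⟩ := wr.der 0
  obtain ⟨φ1, hφ1, eφ1⟩ := wr.der 1
  obtain ⟨φ2, hφ2, eφ2⟩ := wr.der 2
  have hr := sm_diff wr.sm
  have hc := coeffs_zero 15 (fun i => [c, 0, 0, 0, c4, c5, 0, c7, c8, c9, c10, c11, c12 + d12, c13,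
    c14 + d14].getD i 0) φ hφ (by
      filter_upwards [hz] with t ht
      rw [er, eφ] at ht
      simp only [gc0, gc1, gc2] at ht
      simp [Finset.sum_range_succ]
      linear_combination ht)
  have e4 : c4 = 0 := by simpa using hc 4 (by norm_num)
  have e5 : c5 = 0 := by simpa using hc 5 (by norm_num)
  have e7 : c7 = 0 := by simpa using hc 7 (by norm_num)
  have e8 : c8 = 0 := by simpa using hc 8 (by norm_num)
  have e9 : c9 = 0 := by simpa using hc 9 (by norm_num)
  have e10 : c10 = 0 := by simpa using hc 10 (by norm_num)
  have e11 : c11 = 0 := by simpa using hc 11 (by norm_num)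
  have e12 : c12 + d12 = 0 := by simpa using hc 12 (by norm_num)
  have e13 : c13 = 0 := by simpa using hc 13 (by norm_num)
  have e14 : c14 + d14 = 0 := by simpa using hc 14 (by norm_num)
  have f12 : d12 = - c12 := by linarith
  have f14 : d14 = - c14 := by linarith
  subst e4 e5 e7 e8 e9 e10 e11 e13 f12 f14
  refine ⟨c12, c14, fun t => c14 + t * φ0 t, fun t => φ1 t, fun t => φ2 t, by fun_prop, by fun_prop,
    by fun_prop, fun t => ?_, fun t => ?_, fun t => ?_⟩
  all_goals
    rw [show H = _ from funext er]
    simp (disch := fun_prop) only [pd_add, pd_mul, pd_pow, pd_coord, pd_const, eφ0, eφ1, eφ2]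
    simp [wt]; ring

abbrev ee (i : Fin 3) : E3 := Pi.single i 1

theorem vec_eq (x : E3) : x = x 0 • ee 0 + x 1 • ee 1 + x 2 • ee 2 := by
  ext i; fin_cases i <;> simp [ee]

theorem form2_expand (ω : Form2 3) (h1 : ∀ x u₁ u₂ v (c : ℝ), ω x (u₁ + c • u₂) v = ω x u₁ v + c * ω x u₂ v)
    (h2 : ∀ x u v, ω x u v = - ω x v u) (x u v : E3) :
    ω x u v = ω x (ee 0) (ee 1) * (u 0 * v 1 - u 1 * v 0) + ω x (ee 0) (ee 2) * (u 0 * v 2 - u 2 * v 0)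
      + ω x (ee 1) (ee 2) * (u 1 * v 2 - u 2 * v 1) := by
  have hz : ∀ w, ω x 0 w = 0 := by
    intro w
    have := h1 x 0 0 w 1
    simp at this; exact this
  have hl : ∀ u w, ω x u w = u 0 * ω x (ee 0) w + u 1 * ω x (ee 1) w + u 2 * ω x (ee 2) w := by
    intro u w
    have e : u = ((0 + u 0 • ee 0) + u 1 • ee 1) + u 2 • ee 2 := by
      rw [zero_add]; exact vec_eq u
    conv_lhs => rw [e, h1, h1, h1, hz]
    ring
  have hd : ∀ w, ω x w w = 0 := fun w => by linarith [h2 x w w]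
  rw [hl u v, h2 x (ee 0) v, h2 x (ee 1) v, h2 x (ee 2) v, hl v (ee 0), hl v (ee 1), hl v (ee 2),
    hd, hd, hd, h2 x (ee 1) (ee 0), h2 x (ee 2) (ee 0), h2 x (ee 2) (ee 1)]
  ring

theorem basis_sum (c : Fin 9 → ℝ) (x u v : E3) : ∑ k, c k * basis457 k x u v =
    (c 0 + c 3 * x 0 + c 4 * x 1) * (u 0 * v 1 - u 1 * v 0)
    + (c 1 + c 5 * x 0 + c 6 * x 1 + c 8 * x 2) * (u 0 * v 2 - u 2 * v 0)
    + (c 2 + c 6 * x 0 + c 7 * x 1) * (u 1 * v 2 - u 2 * v 1) := by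
  have e0 : basis457 0 x u v = (u 0 * v 1 - u 1 * v 0) := rfl
  have e1 : basis457 1 x u v = (u 0 * v 2 - u 2 * v 0) := rfl
  have e2 : basis457 2 x u v = (u 1 * v 2 - u 2 * v 1) := rfl
  have e3 : basis457 3 x u v = (x 0 * (u 0 * v 1 - u 1 * v 0)) := rfl
  have e4 : basis457 4 x u v = (x 1 * (u 0 * v 1 - u 1 * v 0)) := rfl
  have e5 : basis457 5 x u v = (x 0 * (u 0 * v 2 - u 2 * v 0)) := rfl
  have e6 : basis457 6 x u v = (x 1 * (u 0 * v 2 - u 2 * v 0) + x 0 * (u 1 * v 2 - u 2 * v 1)) := rfl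
  have e7 : basis457 7 x u v = (x 1 * (u 1 * v 2 - u 2 * v 1)) := rfl
  have e8 : basis457 8 x u v = (x 2 * (u 0 * v 2 - u 2 * v 0)) := rfl
  rw [Fin.sum_univ_castSucc, Fin.sum_univ_eight]
  show c 0 * basis457 0 x u v + c 1 * basis457 1 x u v + c 2 * basis457 2 x u v + c 3 * basis457 3 x u v + c 4 * basis457 4 x u v + c 5 * basis457 5 x u v + c 6 * basis457 6 x u v + c 7 * basis457 7 x u v + c 8 * basis457 8 x u v = _
  rw [e0, e1, e2, e3, e4, e5, e6, e7, e8]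
  ring

theorem fderiv_pd (h : E3 → ℝ) (x u : E3) :
    fderiv ℝ h x u = u 0 * pd 0 h x + u 1 * pd 1 h x + u 2 * pd 2 h x := by
  conv_lhs => rw [vec_eq u]
  simp only [map_add, map_smul, smul_eq_mul, pd]

theorem zeroAR_of_InM (η : Form2 3) (hη : IsForm2 3 η) (p q r : ℝ → ℝ) (hM : InM p q r)
    (hp : ∀ᶠ t in 𝓝 (0:ℝ), η (gc t) (ee 0) (ee 1) = p t)
    (hq : ∀ᶠ t in 𝓝 (0:ℝ), η (gc t) (ee 0) (ee 2) = q t)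
    (hr : ∀ᶠ t in 𝓝 (0:ℝ), η (gc t) (ee 1) (ee 2) = r t) : ZeroAR2 3 η gc := by
  obtain ⟨h0, h1, h2, s0, s1, s2, z0, z1, z2, ep, eq, er⟩ := hM
  let β : Form1 3 := fun x u => h0 x * u 0 + h1 x * u 1 + h2 x * u 2
  have hβs : ∀ u, ContDiff ℝ (⊤ : ℕ∞) (fun x => β x u) := by
    intro u
    show ContDiff ℝ (⊤ : ℕ∞) (fun x => h0 x * u 0 + h1 x * u 1 + h2 x * u 2)
    fun_prop
  have hpd : ∀ j u x, pd j (fun y => β y u) x = pd j h0 x * u 0 + pd j h1 x * u 1 + pd j h2 x * u 2 := by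
    intro j u x
    have := sm_diff s0
    have := sm_diff s1
    have := sm_diff s2
    show pd j (fun y => h0 y * u 0 + h1 y * u 1 + h2 y * u 2) x = _
    simp (disch := fun_prop) only [pd_add, pd_mul, pd_const]
    ring
  have hext : ∀ x u v, extD1 3 β x u v =
      (pd 0 h1 x - pd 1 h0 x) * (u 0 * v 1 - u 1 * v 0)
      + (pd 0 h2 x - pd 2 h0 x) * (u 0 * v 2 - u 2 * v 0)
      + (pd 1 h2 x - pd 2 h1 x) * (u 1 * v 2 - u 2 * v 1) := by
    intro x u v
    unfold extD1
    rw [fderiv_pd, fderiv_pd]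
    simp only [hpd]
    ring
  refine ⟨fun x u v => η x u v - extD1 3 β x u v, β, ⟨?_, ?_, ?_⟩, ⟨?_, ?_⟩, ?_, ?_, ?_⟩
  · intro x u₁ u₂ v c
    simp only [hext, hη.1]
    simp
    ring
  · intro x u v
    simp only [hext]
    rw [hη.2.1]; ring
  · intro u v
    obtain ⟨U, hU, hs⟩ := hη.2.2 u v
    refine ⟨U, hU, hs.sub (ContDiff.contDiffOn ?_)⟩
    unfold extD1
    exact (((hβs v).fderiv_right (by simp)).clm_apply contDiff_const).sub
      (((hβs u).fderiv_right (by simp)).clm_apply contDiff_const)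
  · intro x u₁ u₂ c
    simp [β]; ring
  · exact fun u => ⟨Set.univ, univ_mem, (hβs u).contDiffOn⟩
  · show ∀ᶠ t in 𝓝 (0:ℝ), ∀ u v, η (gc t) u v - extD1 3 β (gc t) u v = 0
    filter_upwards [hp, hq, hr] with t h1 h2 h3 u v
    rw [form2_expand η hη.1 hη.2.1, h1, h2, h3, hext, ep, eq, er]
    ring
  · refine Eventually.of_forall fun t u => ?_
    show h0 (gc t) * u 0 + h1 (gc t) * u 1 + h2 (gc t) * u 2 = 0
    rw [z0, z1, z2]; ring
  · exact Eventually.of_forall fun x u v => by ring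

theorem zeroAR_curve (η : Form2 3) (h : ZeroAR2 3 η gc) :
    ∃ (a1 a2 b1 : ℝ) (k l m : ℝ → ℝ), Continuous k ∧ Continuous l ∧ Continuous m ∧
      (∀ᶠ t in 𝓝 (0:ℝ), η (gc t) (ee 0) (ee 1) = a1 * t ^ 7 + 3 * a2 * t ^ 8 - 2 * b1 * t ^ 9 + t ^ 10 * k t) ∧
      (∀ᶠ t in 𝓝 (0:ℝ), η (gc t) (ee 0) (ee 2) = a1 * t ^ 5 + 2 * b1 * t ^ 7 + t ^ 8 * l t) ∧
      (∀ᶠ t in 𝓝 (0:ℝ), η (gc t) (ee 1) (ee 2) = a2 * t ^ 5 + t ^ 7 * m t) := by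
  obtain ⟨α, β, hα, hβ, vα, vβ, he⟩ := h
  have glob : ∀ i : Fin 3, ∃ (a b : ℝ) (k0 k1 k2 : ℝ → ℝ), Continuous k0 ∧ Continuous k1 ∧ Continuous k2 ∧
      (∀ᶠ t in 𝓝 (0:ℝ), pd 0 (fun x => β x (ee i)) (gc t) = 3 * a * t ^ 8 + t ^ 10 * k0 t) ∧
      (∀ᶠ t in 𝓝 (0:ℝ), pd 1 (fun x => β x (ee i)) (gc t) = - a * t ^ 7 + 2 * b * t ^ 9 + t ^ 10 * k1 t) ∧
      (∀ᶠ t in 𝓝 (0:ℝ), pd 2 (fun x => β x (ee i)) (gc t) = - a * t ^ 5 - 2 * b * t ^ 7 + t ^ 8 * k2 t) := by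
    intro i
    obtain ⟨U, hU, hs⟩ := hβ.2 (ee i)
    obtain ⟨H, hH, hE⟩ := exists_global _ U hU hs
    have hz : ∀ᶠ t in 𝓝 (0:ℝ), H (gc t) = 0 := by
      filter_upwards [gc_tendsto.eventually hE, vβ] with t h1 h2
      rw [← h1]; exact h2 _
    have hpd : ∀ᶠ t in 𝓝 (0:ℝ), ∀ j, pd j (fun x => β x (ee i)) (gc t) = pd j H (gc t) := by
      filter_upwards [gc_tendsto.eventually hE.eventuallyEq_nhds] with t ht j
      exact pd_congr j ht
    obtain ⟨a, b, k0, k1, k2, c0, c1, c2, e0, e1, e2⟩ := uniq_core H hH hz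
    refine ⟨a, b, k0, k1, k2, c0, c1, c2, ?_, ?_, ?_⟩
    · filter_upwards [hpd] with t ht
      rw [ht, e0]
    · filter_upwards [hpd] with t ht
      rw [ht, e1]
    · filter_upwards [hpd] with t ht
      rw [ht, e2]
  obtain ⟨a, b, k0, k1, k2, c0, c1, c2, e0, e1, e2⟩ := glob 0
  obtain ⟨a', b', k0', k1', k2', c0', c1', c2', e0', e1', e2'⟩ := glob 1
  obtain ⟨a'', b'', k0'', k1'', k2'', c0'', c1'', c2'', e0'', e1'', e2''⟩ := glob 2
  have hc : ∀ᶠ t in 𝓝 (0:ℝ), ∀ i j, η (gc t) (ee i) (ee j) =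
      pd i (fun x => β x (ee j)) (gc t) - pd j (fun x => β x (ee i)) (gc t) := by
    filter_upwards [gc_tendsto.eventually he, vα] with t h1 h2 i j
    rw [h1]
    have : α (gc t) (ee i) (ee j) = 0 := h2 _ _
    rw [this, zero_add]; rfl
  refine ⟨a, a', b, fun t => k0' t - k1 t, fun t => 3 * a'' + t ^ 2 * k0'' t - k2 t,
    fun t => -a'' + 2 * b'' * t ^ 2 + t ^ 3 * k1'' t + 2 * b' - t * k2' t, by fun_prop, by fun_prop, by fun_prop,
    ?_, ?_, ?_⟩
  · filter_upwards [hc, e0', e1] with t h1 h2 h3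
    rw [h1, h2, h3]; ring
  · filter_upwards [hc, e0'', e2] with t h1 h2 h3
    rw [h1, h2, h3]; ring
  · filter_upwards [hc, e1'', e2'] with t h1 h2 h3
    rw [h1, h2, h3]; ring

theorem main_exists (ω : Form2 3) (hω : IsForm2 3 ω) (hcl : Closed2 3 ω) :
    ∃ c : Fin 9 → ℝ, ZeroAR2 3 (fun x u v => ω x u v - ∑ k, c k * basis457 k x u v) gc := by
  have glob : ∀ i j : Fin 3, ∃ F : E3 → ℝ, ContDiff ℝ (⊤ : ℕ∞) F ∧
      (fun x => ω x (ee i) (ee j)) =ᶠ[𝓝 0] F := by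
    intro i j
    obtain ⟨U, hU, hs⟩ := hω.2.2 (ee i) (ee j)
    exact exists_global _ U hU hs
  obtain ⟨P, hP, eP⟩ := glob 0 1
  obtain ⟨Q, hQ, eQ⟩ := glob 0 2
  obtain ⟨R, hR, eR⟩ := glob 1 2
  obtain ⟨c, hM⟩ := existence_core P Q R hP hQ hR (by
    filter_upwards [gc_tendsto.eventually hcl, gc_tendsto.eventually eP.eventuallyEq_nhds,
      gc_tendsto.eventually eQ.eventuallyEq_nhds, gc_tendsto.eventually eR.eventuallyEq_nhds]
      with t h hp hq hr
    rw [← pd_congr 2 hp, ← pd_congr 1 hq, ← pd_congr 0 hr]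
    have := h (ee 0) (ee 1) (ee 2)
    unfold extD2 at this
    unfold pd
    linarith)
  refine ⟨c, zeroAR_of_InM _ ⟨?_, ?_, ?_⟩ _ _ _ hM ?_ ?_ ?_⟩
  · intro x u₁ u₂ v d
    simp only [basis_sum, hω.1]
    simp
    ring
  · intro x u v
    simp only [basis_sum]
    rw [hω.2.1]; ring
  · intro u v
    obtain ⟨U, hU, hs⟩ := hω.2.2 u v
    refine ⟨U, hU, hs.sub (ContDiff.contDiffOn ?_)⟩
    simp only [basis_sum]
    fun_prop
  · filter_upwards [gc_tendsto.eventually eP] with t ht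
    simp only [basis_sum]
    rw [ht]; simp [ee]
  · filter_upwards [gc_tendsto.eventually eQ] with t ht
    simp only [basis_sum]
    rw [ht]; simp [ee]
  · filter_upwards [gc_tendsto.eventually eR] with t ht
    simp only [basis_sum]
    rw [ht]; simp [ee]

theorem main_unique (ω : Form2 3) (c d : Fin 9 → ℝ)
    (hc : ZeroAR2 3 (fun x u v => ω x u v - ∑ k, c k * basis457 k x u v) gc)
    (hd : ZeroAR2 3 (fun x u v => ω x u v - ∑ k, d k * basis457 k x u v) gc) : c = d := by
  obtain ⟨a1, a2, b1, k, l, m, ck, cl, cm, e1, e2, e3⟩ := zeroAR_curve _ hc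
  obtain ⟨a1', a2', b1', k', l', m', ck', cl', cm', e1', e2', e3'⟩ := zeroAR_curve _ hd
  have H1 := coeffs_zero 10 (fun i => [d 0 - c 0, 0, 0, 0, d 3 - c 3, d 4 - c 4, 0, a1' - a1,
      3 * (a2' - a2), - 2 * (b1' - b1)].getD i 0) (fun t => k' t - k t) (by fun_prop) (by
    filter_upwards [e1, e1'] with t h h'
    simp only [basis_sum] at h h'
    simp [ee] at h h'
    simp only [Finset.sum_range_succ, Finset.sum_range_zero, List.getD_cons_zero, List.getD_cons_succ]
    linear_combination h - h')
  have H2 := coeffs_zero 8 (fun i => [d 1 - c 1, 0, 0, 0, d 5 - c 5, d 6 - c 6 + (a1' - a1), 0,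
      d 8 - c 8 + 2 * (b1' - b1)].getD i 0) (fun t => l' t - l t) (by fun_prop) (by
    filter_upwards [e2, e2'] with t h h'
    simp only [basis_sum] at h h'
    simp [ee] at h h'
    simp only [Finset.sum_range_succ, Finset.sum_range_zero, List.getD_cons_zero, List.getD_cons_succ]
    linear_combination h - h')
  have H3 := coeffs_zero 7 (fun i => [d 2 - c 2, 0, 0, 0, d 6 - c 6, d 7 - c 7 + (a2' - a2), 0
      ].getD i 0) (fun t => m' t - m t) (by fun_prop) (by
    filter_upwards [e3, e3'] with t h h'
    simp only [basis_sum] at h h'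
    simp [ee] at h h'
    simp only [Finset.sum_range_succ, Finset.sum_range_zero, List.getD_cons_zero, List.getD_cons_succ]
    linear_combination h - h')
  have x0 : d 0 - c 0 = 0 := H1 0 (by norm_num)
  have x3 : d 3 - c 3 = 0 := H1 4 (by norm_num)
  have x4 : d 4 - c 4 = 0 := H1 5 (by norm_num)
  have y1 : a1' - a1 = 0 := H1 7 (by norm_num)
  have y2 : 3 * (a2' - a2) = 0 := H1 8 (by norm_num)
  have y3 : - 2 * (b1' - b1) = 0 := H1 9 (by norm_num)
  have x1 : d 1 - c 1 = 0 := H2 0 (by norm_num)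
  have x5 : d 5 - c 5 = 0 := H2 4 (by norm_num)
  have x8 : d 8 - c 8 + 2 * (b1' - b1) = 0 := H2 7 (by norm_num)
  have x2 : d 2 - c 2 = 0 := H3 0 (by norm_num)
  have x6 : d 6 - c 6 = 0 := H3 4 (by norm_num)
  have x7 : d 7 - c 7 + (a2' - a2) = 0 := H3 5 (by norm_num)
  funext i
  fin_cases i
  · show c 0 = d 0
    linarith
  · show c 1 = d 1
    linarith
  · show c 2 = d 2
    linarith
  · show c 3 = d 3
    linarith
  · show c 4 = d 4
    linarith
  · show c 5 = d 5
    linarith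
  · show c 6 = d 6
    linarith
  · show c 7 = d 7
    linarith
  · show c 8 = d 8
    linarith

/-- The algebraic restrictions to `g(t) = (t⁴,t⁵,t⁷)` of the nine closed 2-forms above
form a basis of the space of algebraic restrictions of closed 2-forms. -/
theorem algRestriction_basis_457
    (ω : Form2 3) (hω : IsForm2 3 ω) (hcl : Closed2 3 ω) :
    ∃! c : Fin 9 → ℝ,
      ZeroAR2 3 (fun x u v => ω x u v - ∑ k, c k * basis457 k x u v)
        (fun t => ![t^4, t^5, t^7]) := by
  obtain ⟨c, hc⟩ := main_exists ω hω hcl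
  exact ⟨c, hc, fun d hd => main_unique ω d c hd hc⟩
end
end

section
/- Let g:(ℝ,0)→(ℝ^4,0) be the curve-germ g(t) = (t^4,t^5,t^6,t^7). (i) For all real numbers c_1≠0 and c_2, there exist germs of diffeomorphisms Φ:(ℝ^4,0)→(ℝ^4,0) and φ:(ℝ,0)→(ℝ,0) with Φ∘g = g∘φ near 0 such that the pullback Φ^*(dx_2∧dx_3 − (3/2)dx_1∧dx_4 + c_1·dx_2∧dx_4 + c_2·dx_3∧dx_4) and the 2-form dx_2∧dx_3 − (3/2)dx_1∧dx_4 + c_1·dx_2∧dx_4 have the same algebraic restriction to g. (ii) For every sign ε∈{+1,−1} and all real numbers c_1≠0, c_2, c_3, there exist germs of diffeomorphisms Φ:(ℝ^4,0)→(ℝ^4,0) and φ:(ℝ,0)→(ℝ,0) with Φ∘g = g∘φ near 0 such that Φ^*(ε·dx_1∧dx_3 + c_1·dx_1∧dx_4 + c_2·dx_2∧dx_4 + c_3·dx_3∧dx_4) and ε·dx_1∧dx_3 + c_1·dx_1∧dx_4 + c_2·dx_2∧dx_4 have the same algebraic restriction to g. -/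
open Filter Topology

noncomputable section

/-- The monomial curve `g(t) = (t⁴,t⁵,t⁶,t⁷)`. -/
def g4567 : ℝ → (Fin 4 → ℝ) := fun t => ![t^4, t^5, t^6, t^7]


def PolyFn (f : ℝ → ℝ) : Prop := ∃ p : Polynomial ℝ, ∀ t, f t = p.eval t

lemma PolyFn.const (c : ℝ) : PolyFn (fun _ => c) := ⟨Polynomial.C c, by simp⟩
lemma PolyFn.id : PolyFn (fun t => t) := ⟨Polynomial.X, by simp⟩
lemma PolyFn.add {f g : ℝ → ℝ} (hf : PolyFn f) (hg : PolyFn g) : PolyFn (fun t => f t + g t) := by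
  obtain ⟨p, hp⟩ := hf
  obtain ⟨q, hq⟩ := hg
  exact ⟨p + q, by simp [hp, hq]⟩
lemma PolyFn.mul {f g : ℝ → ℝ} (hf : PolyFn f) (hg : PolyFn g) : PolyFn (fun t => f t * g t) := by
  obtain ⟨p, hp⟩ := hf
  obtain ⟨q, hq⟩ := hg
  exact ⟨p * q, by simp [hp, hq]⟩
lemma PolyFn.pow {f : ℝ → ℝ} (hf : PolyFn f) (n : ℕ) : PolyFn (fun t => f t ^ n) := by
  obtain ⟨p, hp⟩ := hf
  exact ⟨p ^ n, by simp [hp]⟩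
lemma PolyFn.induct {C : (ℝ → ℝ) → Prop} (hadd : ∀ f g, C f → C g → C (fun t => f t + g t))
    (hm : ∀ (n : ℕ) (c : ℝ), C (fun t => c * t ^ n)) {f : ℝ → ℝ} (hf : PolyFn f) : C f := by
  obtain ⟨p, hp⟩ := hf
  have : f = fun t => p.eval t := funext hp
  subst this
  clear hp
  induction p using Polynomial.induction_on' with
  | add p q h1 h2 => simpa using hadd _ _ h1 h2
  | monomial n c => simpa using hm n c

def GD (F : (Fin 4 → ℝ) → ℝ) (a d0 d1 d2 d3 : ℝ → ℝ) : Prop :=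
  ContDiff ℝ (⊤ : ℕ∞) F ∧ ∀ t, F (g4567 t) = a t ∧
    ∀ v, fderiv ℝ F (g4567 t) v = v 0 * d0 t + v 1 * d1 t + v 2 * d2 t + v 3 * d3 t

def ExG (a d0 d1 d2 d3 : ℝ → ℝ) : Prop := ∃ F, GD F a d0 d1 d2 d3

lemma ExG.congr {a d0 d1 d2 d3 a' d0' d1' d2' d3' : ℝ → ℝ} (h : ExG a d0 d1 d2 d3)
    (h1 : ∀ t, a t = a' t) (h2 : ∀ t, d0 t = d0' t) (h3 : ∀ t, d1 t = d1' t)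
    (h4 : ∀ t, d2 t = d2' t) (h5 : ∀ t, d3 t = d3' t) : ExG a' d0' d1' d2' d3' := by
  rw [← funext h1, ← funext h2, ← funext h3, ← funext h4, ← funext h5]
  exact h

lemma ExG.coord (i : Fin 4) (d0 d1 d2 d3 : ℝ)
    (h : ∀ v : Fin 4 → ℝ, v i = v 0 * d0 + v 1 * d1 + v 2 * d2 + v 3 * d3) :
    ExG (fun t => g4567 t i) (fun _ => d0) (fun _ => d1) (fun _ => d2) (fun _ => d3) := by
  refine ⟨fun x => x i, by fun_prop, fun t => ⟨rfl, fun v => ?_⟩⟩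
  have : fderiv ℝ (fun x : Fin 4 → ℝ => x i) (g4567 t) = ContinuousLinearMap.proj i :=
    (ContinuousLinearMap.proj (R := ℝ) (φ := fun _ : Fin 4 => ℝ) i).hasFDerivAt.fderiv
  rw [this]
  simpa using h v

lemma ExG.x0 : ExG (fun t => t ^ 4) (fun _ => 1) (fun _ => 0) (fun _ => 0) (fun _ => 0) := by
  simpa [g4567] using ExG.coord 0 1 0 0 0 (by simp)
lemma ExG.x1 : ExG (fun t => t ^ 5) (fun _ => 0) (fun _ => 1) (fun _ => 0) (fun _ => 0) := by
  simpa [g4567] using ExG.coord 1 0 1 0 0 (by simp)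
lemma ExG.x2 : ExG (fun t => t ^ 6) (fun _ => 0) (fun _ => 0) (fun _ => 1) (fun _ => 0) := by
  simpa [g4567] using ExG.coord 2 0 0 1 0 (by simp)
lemma ExG.x3 : ExG (fun t => t ^ 7) (fun _ => 0) (fun _ => 0) (fun _ => 0) (fun _ => 1) := by
  simpa [g4567] using ExG.coord 3 0 0 0 1 (by simp)

section
variable {a d0 d1 d2 d3 b e0 e1 e2 e3 : ℝ → ℝ}

lemma ExG.add (h : ExG a d0 d1 d2 d3) (h' : ExG b e0 e1 e2 e3) :
    ExG (fun t => a t + b t) (fun t => d0 t + e0 t) (fun t => d1 t + e1 t)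
      (fun t => d2 t + e2 t) (fun t => d3 t + e3 t) := by
  obtain ⟨F, hF, h⟩ := h
  obtain ⟨H, hH, h'⟩ := h'
  refine ⟨fun x => F x + H x, hF.add hH, fun t => ⟨by simp only [(h t).1, (h' t).1], fun v => ?_⟩⟩
  rw [fderiv_fun_add (hF.differentiable (by simp) _) (hH.differentiable (by simp) _)]
  simp only [_root_.add_apply, (h t).2, (h' t).2]
  ring

lemma ExG.mul (h : ExG a d0 d1 d2 d3) (h' : ExG b e0 e1 e2 e3) :
    ExG (fun t => a t * b t) (fun t => a t * e0 t + b t * d0 t) (fun t => a t * e1 t + b t * d1 t)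
      (fun t => a t * e2 t + b t * d2 t) (fun t => a t * e3 t + b t * d3 t) := by
  obtain ⟨F, hF, h⟩ := h
  obtain ⟨H, hH, h'⟩ := h'
  refine ⟨fun x => F x * H x, hF.mul hH, fun t => ⟨by simp only [(h t).1, (h' t).1], fun v => ?_⟩⟩
  rw [fderiv_fun_mul (hF.differentiable (by simp) _) (hH.differentiable (by simp) _)]
  simp only [_root_.add_apply, _root_.smul_apply, (h t).2, (h' t).2,
    (h t).1, (h' t).1, smul_eq_mul]
  ring

lemma ExG.const (c : ℝ) :
    ExG (fun _ => c) (fun _ => 0) (fun _ => 0) (fun _ => 0) (fun _ => 0) :=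
  ⟨fun _ => c, contDiff_const, fun t => ⟨rfl, fun v => by simp⟩⟩

lemma ExG.smul (c : ℝ) (h : ExG a d0 d1 d2 d3) :
    ExG (fun t => c * a t) (fun t => c * d0 t) (fun t => c * d1 t)
      (fun t => c * d2 t) (fun t => c * d3 t) :=
  ((ExG.const c).mul h).congr (fun _ => rfl) (by simp) (by simp) (by simp) (by simp)

lemma ExG.pow (h : ExG a d0 d1 d2 d3) (n : ℕ) :
    ExG (fun t => a t ^ n) (fun t => n * a t ^ (n - 1) * d0 t) (fun t => n * a t ^ (n - 1) * d1 t)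
      (fun t => n * a t ^ (n - 1) * d2 t) (fun t => n * a t ^ (n - 1) * d3 t) := by
  induction n with
  | zero => simpa using ExG.const 1
  | succ n ih =>
    have key : ∀ A d : ℝ, A ^ n * d + A * ((n : ℝ) * A ^ (n - 1) * d)
        = ((n + 1 : ℕ) : ℝ) * A ^ (n + 1 - 1) * d := by
      intro A d
      cases n with
      | zero => simp
      | succ k => simp only [Nat.add_sub_cancel]; push_cast; ring
    exact (ih.mul h).congr (fun t => by ring) (fun t => key _ _) (fun t => key _ _)
      (fun t => key _ _) (fun t => key _ _)
end

lemma ExG.mono (k0 k1 k2 k3 : ℕ) : ExG (fun t => (t^4)^k0 * (t^5)^k1 * ((t^6)^k2 * (t^7)^k3))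
    (fun t => k0 * (t^4)^(k0-1) * (t^5)^k1 * ((t^6)^k2 * (t^7)^k3))
    (fun t => k1 * (t^4)^k0 * (t^5)^(k1-1) * ((t^6)^k2 * (t^7)^k3))
    (fun t => k2 * (t^4)^k0 * (t^5)^k1 * ((t^6)^(k2-1) * (t^7)^k3))
    (fun t => k3 * (t^4)^k0 * (t^5)^k1 * ((t^6)^k2 * (t^7)^(k3-1))) :=
  (((ExG.x0.pow k0).mul (ExG.x1.pow k1)).mul ((ExG.x2.pow k2).mul (ExG.x3.pow k3))).congr
    (fun t => by ring) (fun t => by ring) (fun t => by ring) (fun t => by ring) (fun t => by ring)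

def Gr (m : ℕ) : Prop := ∀ c0 c1 c2 c3 : ℝ,
  ExG (fun t => ((4*c0+5*c1+6*c2+7*c3)/(m+16)) * t^(m+16)) (fun t => c0 * t^(m+12))
    (fun t => c1 * t^(m+11)) (fun t => c2 * t^(m+10)) (fun t => c3 * t^(m+9))

lemma Gr.b0 : Gr 0 := by
  intro c0 c1 c2 c3
  refine ((((ExG.mono 0 2 1 0).smul ((1/2) * c1 + (-1/2) * c3)).add
    ((ExG.mono 1 0 2 0).smul ((-1/4) * c1 + (1/2) * c2 + (1/4) * c3))).add
    (((ExG.mono 1 1 0 1).smul (c3)).add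
    ((ExG.mono 4 0 0 0).smul ((1/4) * c0 + (1/16) * c1 + (-1/8) * c2 + (-5/16) * c3)))).congr ?_ ?_ ?_ ?_ ?_
  all_goals intro t; (try simp only [Nat.reduceSub, Nat.cast_ofNat, Nat.cast_one, Nat.cast_zero]); ring

lemma Gr.b1 : Gr 1 := by
  intro c0 c1 c2 c3
  refine ((((ExG.mono 0 1 2 0).smul ((-1/17) * c0 + (3/17) * c1 + (7/17) * c2 + (-6/17) * c3)).add
    ((ExG.mono 0 2 0 1).smul ((-2/17) * c0 + (6/17) * c1 + (-3/17) * c2 + (5/17) * c3))).add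
    (((ExG.mono 1 0 1 1).smul ((2/17) * c0 + (-6/17) * c1 + (3/17) * c2 + (12/17) * c3)).add
    ((ExG.mono 3 1 0 0).smul ((5/17) * c0 + (2/17) * c1 + (-1/17) * c2 + (-4/17) * c3)))).congr ?_ ?_ ?_ ?_ ?_
  all_goals intro t; (try simp only [Nat.reduceSub, Nat.cast_ofNat, Nat.cast_one, Nat.cast_zero]); ring

lemma Gr.b2 : Gr 2 := by
  intro c0 c1 c2 c3
  refine ((((ExG.mono 0 1 1 1).smul ((-2/9) * c0 + (2/9) * c1 + (2/3) * c2 + (1/9) * c3)).add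
    ((ExG.mono 1 0 0 2).smul ((1/9) * c0 + (-1/9) * c1 + (-1/3) * c2 + (4/9) * c3))).add
    (((ExG.mono 2 2 0 0).smul ((1/9) * c0 + (7/18) * c1 + (-1/3) * c2 + (-1/18) * c3)).add
    ((ExG.mono 3 0 1 0).smul ((2/9) * c0 + (-2/9) * c1 + (1/3) * c2 + (-1/9) * c3)))).congr ?_ ?_ ?_ ?_ ?_
  all_goals intro t; (try simp only [Nat.reduceSub, Nat.cast_ofNat, Nat.cast_one, Nat.cast_zero]); ring

lemma Gr.b3 : Gr 3 := by
  intro c0 c1 c2 c3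
  refine ((((ExG.mono 0 1 0 2).smul ((-2/19) * c0 + (7/19) * c1 + (-3/19) * c2 + (6/19) * c3)).add
    ((ExG.mono 0 0 2 1).smul ((-1/19) * c0 + (-6/19) * c1 + (8/19) * c2 + (3/19) * c3))).add
    (((ExG.mono 2 1 1 0).smul ((2/19) * c0 + (12/19) * c1 + (3/19) * c2 + (-6/19) * c3)).add
    ((ExG.mono 3 0 0 1).smul ((5/19) * c0 + (-8/19) * c1 + (-2/19) * c2 + (4/19) * c3)))).congr ?_ ?_ ?_ ?_ ?_
  all_goals intro t; (try simp only [Nat.reduceSub, Nat.cast_ofNat, Nat.cast_one, Nat.cast_zero]); ring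

lemma Gr.step (m : ℕ) (h : Gr m) : Gr (m + 4) := by
  intro c0 c1 c2 c3
  have hm : (m : ℝ) + 16 ≠ 0 := by positivity
  have hm' : (m : ℝ) + 20 ≠ 0 := by positivity
  have hm'' : (m : ℝ) + 4 + 16 ≠ 0 := by positivity
  refine (ExG.x0.mul (h ((c0 - (5*c1+6*c2+7*c3)/(m+16))*(m+16)/(m+20)) c1 c2 c3)).congr
    ?_ ?_ ?_ ?_ ?_
  · intro t
    push_cast
    rw [show m + 4 + 16 = (m + 16) + 4 by ring, pow_add]
    field_simp
    ring
  · intro t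
    rw [show m + 4 + 12 = (m + 12) + 4 by ring, pow_add t (m+12) 4]
    field_simp
    ring
  · intro t; ring
  · intro t; ring
  · intro t; ring

lemma Gr.all : ∀ m, Gr m
  | 0 => Gr.b0
  | 1 => Gr.b1
  | 2 => Gr.b2
  | 3 => Gr.b3
  | m + 4 => Gr.step m (Gr.all m)

lemma ExG.tail1 (c0 c1 c2 c3 : ℝ) {q : ℝ → ℝ} (hq : PolyFn q) :
    ∃ a, ExG a (fun t => c0 * (t^12 * q t)) (fun t => c1 * (t^11 * q t))
      (fun t => c2 * (t^10 * q t)) (fun t => c3 * (t^9 * q t)) := by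
  refine PolyFn.induct (C := fun q => ∃ a, ExG a (fun t => c0 * (t^12 * q t))
    (fun t => c1 * (t^11 * q t)) (fun t => c2 * (t^10 * q t)) (fun t => c3 * (t^9 * q t))) ?_ ?_ hq
  · rintro f g ⟨a, ha⟩ ⟨b, hb⟩
    exact ⟨_, (ha.add hb).congr (fun _ => rfl) (fun t => by ring) (fun t => by ring)
      (fun t => by ring) (fun t => by ring)⟩
  · intro n c
    exact ⟨_, (Gr.all n (c*c0) (c*c1) (c*c2) (c*c3)).congr (fun _ => rfl) (fun t => by ring)
      (fun t => by ring) (fun t => by ring) (fun t => by ring)⟩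

lemma ExG.tail {q0 q1 q2 q3 : ℝ → ℝ} (h0 : PolyFn q0) (h1 : PolyFn q1) (h2 : PolyFn q2)
    (h3 : PolyFn q3) :
    ∃ a, ExG a (fun t => t^12 * q0 t) (fun t => t^11 * q1 t)
      (fun t => t^10 * q2 t) (fun t => t^9 * q3 t) := by
  obtain ⟨a0, k0⟩ := ExG.tail1 1 0 0 0 h0
  obtain ⟨a1, k1⟩ := ExG.tail1 0 1 0 0 h1
  obtain ⟨a2, k2⟩ := ExG.tail1 0 0 1 0 h2
  obtain ⟨a3, k3⟩ := ExG.tail1 0 0 0 1 h3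
  exact ⟨_, ((k0.add k1).add (k2.add k3)).congr (fun _ => rfl) (fun t => by ring)
      (fun t => by ring) (fun t => by ring) (fun t => by ring)⟩

lemma ExG.liftMono : ∀ m : ℕ, ∃ c0 c1 c2 c3 : ℝ, ExG (fun t => t^(m+10)) (fun t => c0 * t^(m+6))
    (fun t => c1 * t^(m+5)) (fun t => c2 * t^(m+4)) (fun t => c3 * t^(m+3))
  | 0 => by
    refine ⟨1, 0, 1, 0, (ExG.mono 1 0 1 0).congr ?_ ?_ ?_ ?_ ?_⟩
    all_goals intro t; (try simp only [Nat.reduceSub, Nat.cast_ofNat, Nat.cast_one, Nat.cast_zero]); ring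
  | 1 => by
    refine ⟨1, 0, 0, 1, (ExG.mono 1 0 0 1).congr ?_ ?_ ?_ ?_ ?_⟩
    all_goals intro t; (try simp only [Nat.reduceSub, Nat.cast_ofNat, Nat.cast_one, Nat.cast_zero]); ring
  | 2 => by
    refine ⟨3, 0, 0, 0, (ExG.mono 3 0 0 0).congr ?_ ?_ ?_ ?_ ?_⟩
    all_goals intro t; (try simp only [Nat.reduceSub, Nat.cast_ofNat, Nat.cast_one, Nat.cast_zero]); ring
  | 3 => by
    refine ⟨2, 1, 0, 0, (ExG.mono 2 1 0 0).congr ?_ ?_ ?_ ?_ ?_⟩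
    all_goals intro t; (try simp only [Nat.reduceSub, Nat.cast_ofNat, Nat.cast_one, Nat.cast_zero]); ring
  | 4 => by
    refine ⟨2, 0, 1, 0, (ExG.mono 2 0 1 0).congr ?_ ?_ ?_ ?_ ?_⟩
    all_goals intro t; (try simp only [Nat.reduceSub, Nat.cast_ofNat, Nat.cast_one, Nat.cast_zero]); ring
  | 5 => by
    refine ⟨2, 0, 0, 1, (ExG.mono 2 0 0 1).congr ?_ ?_ ?_ ?_ ?_⟩
    all_goals intro t; (try simp only [Nat.reduceSub, Nat.cast_ofNat, Nat.cast_one, Nat.cast_zero]); ring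
  | m + 6 => by
    refine ⟨(m+16)/4, 0, 0, 0, (Gr.all m ((m+16)/4) 0 0 0).congr ?_ ?_ ?_ ?_ ?_⟩
    · intro t
      have : (m : ℝ) + 16 ≠ 0 := by positivity
      field_simp
      ring
    all_goals intro t; ring

lemma ExG.lift (N : ℕ) {r : ℝ → ℝ} (hr : PolyFn r) : ∃ s0 s1 s2 s3, PolyFn s0 ∧ PolyFn s1 ∧
    PolyFn s2 ∧ PolyFn s3 ∧ ExG (fun t => t^(N+10) * r t) (fun t => t^(N+6) * s0 t)
      (fun t => t^(N+5) * s1 t) (fun t => t^(N+4) * s2 t) (fun t => t^(N+3) * s3 t) := by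
  refine PolyFn.induct (C := fun r => ∃ s0 s1 s2 s3, PolyFn s0 ∧ PolyFn s1 ∧
    PolyFn s2 ∧ PolyFn s3 ∧ ExG (fun t => t^(N+10) * r t) (fun t => t^(N+6) * s0 t)
      (fun t => t^(N+5) * s1 t) (fun t => t^(N+4) * s2 t) (fun t => t^(N+3) * s3 t)) ?_ ?_ hr
  · rintro f g ⟨s0, s1, s2, s3, h0, h1, h2, h3, h⟩ ⟨r0, r1, r2, r3, k0, k1, k2, k3, k⟩
    exact ⟨_, _, _, _, h0.add k0, h1.add k1, h2.add k2, h3.add k3,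
      (h.add k).congr (fun t => by ring) (fun t => by ring) (fun t => by ring)
      (fun t => by ring) (fun t => by ring)⟩
  · intro n c
    obtain ⟨c0, c1, c2, c3, h⟩ := ExG.liftMono (N + n)
    exact ⟨_, _, _, _, (PolyFn.const (c*c0)).mul (PolyFn.id.pow n),
      (PolyFn.const (c*c1)).mul (PolyFn.id.pow n), (PolyFn.const (c*c2)).mul (PolyFn.id.pow n),
      (PolyFn.const (c*c3)).mul (PolyFn.id.pow n),
      (h.smul c).congr (fun t => by ring) (fun t => by ring) (fun t => by ring)
      (fun t => by ring) (fun t => by ring)⟩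

lemma mulTrunc {f g rf rg : ℝ → ℝ} {f1 f2 f3 f4 f5 g1 g2 g3 g4 g5 : ℝ}
    (hrf : PolyFn rf) (hrg : PolyFn rg)
    (hf : ∀ t, f t = 1 + f1*t + f2*t^2 + f3*t^3 + f4*t^4 + f5*t^5 + t^6 * rf t)
    (hg : ∀ t, g t = 1 + g1*t + g2*t^2 + g3*t^3 + g4*t^4 + g5*t^5 + t^6 * rg t)
    (p1 p2 p3 p4 p5 : ℝ) (h1 : p1 = f1 + g1) (h2 : p2 = f2 + f1*g1 + g2)
    (h3 : p3 = f3 + f2*g1 + f1*g2 + g3) (h4 : p4 = f4 + f3*g1 + f2*g2 + f1*g3 + g4)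
    (h5 : p5 = f5 + f4*g1 + f3*g2 + f2*g3 + f1*g4 + g5) :
    ∃ r, PolyFn r ∧ ∀ t, f t * g t = 1 + p1*t + p2*t^2 + p3*t^3 + p4*t^4 + p5*t^5 + t^6 * r t := by
  refine ⟨fun t => (f5*g1 + f4*g2 + f3*g3 + f2*g4 + f1*g5) + (f5*g2 + f4*g3 + f3*g4 + f2*g5) * t
    + (f5*g3 + f4*g4 + f3*g5) * t^2 + (f5*g4 + f4*g5) * t^3 + (f5*g5) * t^4
    + rf t * (1 + g1*t + g2*t^2 + g3*t^3 + g4*t^4 + g5*t^5)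
    + rg t * (1 + f1*t + f2*t^2 + f3*t^3 + f4*t^4 + f5*t^5) + t^6 * (rf t * rg t), ?_, ?_⟩
  · repeat first | exact hrf | exact hrg | exact PolyFn.id | exact PolyFn.const _ | apply PolyFn.add | apply PolyFn.mul | apply PolyFn.pow
  · intro t
    rw [hf, hg, h1, h2, h3, h4, h5]
    ring


def Prim (β : Form1 4) (ω : Form2 4) : Prop :=
  (∀ x u₁ u₂ (c : ℝ), β x (u₁ + c • u₂) = β x u₁ + c * β x u₂) ∧
  (∀ u, ContDiff ℝ (⊤ : ℕ∞) (fun x => β x u)) ∧ ∀ x u v, extD1 4 β x u v = ω x u v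

lemma Prim.add {β β' : Form1 4} {ω ω' : Form2 4} (h : Prim β ω) (h' : Prim β' ω') :
    Prim (fun x u => β x u + β' x u) (fun x u v => ω x u v + ω' x u v) := by
  refine ⟨fun x u₁ u₂ c => ?_, fun u => (h.2.1 u).add (h'.2.1 u), fun x u v => ?_⟩
  · simp only [h.1, h'.1]; ring
  · show _ = ω x u v + ω' x u v
    rw [← h.2.2, ← h'.2.2]
    show fderiv ℝ (fun y => β y v + β' y v) x u - fderiv ℝ (fun y => β y u + β' y u) x v =
      (fderiv ℝ (fun y => β y v) x u - fderiv ℝ (fun y => β y u) x v)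
      + (fderiv ℝ (fun y => β' y v) x u - fderiv ℝ (fun y => β' y u) x v)
    rw [fderiv_fun_add ((h.2.1 v).differentiable (by simp) _) ((h'.2.1 v).differentiable (by simp) _),
      fderiv_fun_add ((h.2.1 u).differentiable (by simp) _) ((h'.2.1 u).differentiable (by simp) _)]
    simp only [_root_.add_apply]
    ring

lemma Prim.adb {A B : (Fin 4 → ℝ) → ℝ} (hA : ContDiff ℝ (⊤ : ℕ∞) A)
    (hB : ContDiff ℝ (⊤ : ℕ∞) B) (c : ℝ) :
    Prim (fun x u => c * (A x * fderiv ℝ B x u)) (fun x u v => c * (fderiv ℝ A x u * fderiv ℝ B x v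
      - fderiv ℝ A x v * fderiv ℝ B x u)) := by
  have hD : ContDiff ℝ (⊤ : ℕ∞) (fderiv ℝ B) := hB.fderiv_right (by simp)
  have hDv : ∀ v, ContDiff ℝ (⊤ : ℕ∞) (fun x => fderiv ℝ B x v) := fun v =>
    hD.clm_apply contDiff_const
  refine ⟨fun x u₁ u₂ c => ?_, fun u => contDiff_const.mul (hA.mul (hDv u)), fun x u v => ?_⟩
  · simp only [map_add, map_smul, smul_eq_mul]; ring
  · have key : ∀ v u, fderiv ℝ (fun x => c * (A x * fderiv ℝ B x v)) x u
        = c * (fderiv ℝ A x u * fderiv ℝ B x v + A x * fderiv ℝ (fderiv ℝ B) x u v) := by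
      intro v u
      rw [fderiv_const_mul ((hA.mul (hDv v)).differentiable (by simp) _),
        fderiv_fun_mul (hA.differentiable (by simp) _) ((hDv v).differentiable (by simp) _),
        fderiv_clm_apply (hD.differentiable (by simp) _) (differentiableAt_const v)]
      simp
      ring
    have hs : fderiv ℝ (fderiv ℝ B) x u v = fderiv ℝ (fderiv ℝ B) x v u :=
      (hB.contDiffAt.isSymmSndFDerivAt (by rw [minSmoothness_of_isRCLikeNormedField]; exact WithTop.coe_le_coe.2 (OrderTop.le_top (2 : ℕ∞)))).eq u v
    unfold extD1
    rw [key, key, hs]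
    ring

lemma fderiv_coord (i : Fin 4) (x u : Fin 4 → ℝ) : fderiv ℝ (fun x : Fin 4 → ℝ => x i) x u = u i := by
  have : fderiv ℝ (fun x : Fin 4 → ℝ => x i) x = ContinuousLinearMap.proj i :=
    (ContinuousLinearMap.proj (R := ℝ) (φ := fun _ : Fin 4 => ℝ) i).hasFDerivAt.fderiv
  rw [this]; rfl

def uu (a1 a2 a3 a4 a5 t : ℝ) : ℝ := 1 + a1*t + a2*t^2 + a3*t^3 + a4*t^4 + a5*t^5

def Tr (f : ℝ → ℝ) (p1 p2 p3 p4 p5 : ℝ) : Prop := ∃ r, PolyFn r ∧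
  ∀ t, f t = 1 + p1*t + p2*t^2 + p3*t^3 + p4*t^4 + p5*t^5 + t^6 * r t

lemma uu_pow4 (a1 a2 a3 a4 a5 : ℝ) : Tr (fun t => uu a1 a2 a3 a4 a5 t ^ 4)
    (4 * a1)
    (6 * a1^2 + 4 * a2)
    (12 * a1 * a2 + 4 * a1^3 + 4 * a3)
    (12 * a1 * a3 + 12 * a1^2 * a2 + a1^4 + 6 * a2^2 + 4 * a4)
    (12 * a1 * a2^2 + 12 * a1 * a4 + 12 * a1^2 * a3 + 4 * a1^3 * a2 + 12 * a2 * a3 + 4 * a5) := by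
  have hu : ∀ t, uu a1 a2 a3 a4 a5 t
      = 1 + a1*t + a2*t^2 + a3*t^3 + a4*t^4 + a5*t^5 + t^6 * (fun _ => (0:ℝ)) t := by
    intro t; simp [uu]
  obtain ⟨r, hr, h⟩ := mulTrunc (PolyFn.const 0) (PolyFn.const 0) hu hu _ _ _ _ _ rfl rfl rfl rfl rfl
  obtain ⟨r', hr', h'⟩ := mulTrunc hr hr h h _ _ _ _ _ rfl rfl rfl rfl rfl
  refine ⟨r', hr', fun t => ?_⟩
  have := h' t
  linear_combination this

lemma uu_pow5 (a1 a2 a3 a4 a5 : ℝ) : Tr (fun t => uu a1 a2 a3 a4 a5 t ^ 5)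
    (5 * a1)
    (10 * a1^2 + 5 * a2)
    (20 * a1 * a2 + 10 * a1^3 + 5 * a3)
    (20 * a1 * a3 + 30 * a1^2 * a2 + 5 * a1^4 + 10 * a2^2 + 5 * a4)
    (30 * a1 * a2^2 + 20 * a1 * a4 + 30 * a1^2 * a3 + 20 * a1^3 * a2 + a1^5 + 20 * a2 * a3 + 5 * a5) := by
  have hu : ∀ t, uu a1 a2 a3 a4 a5 t
      = 1 + a1*t + a2*t^2 + a3*t^3 + a4*t^4 + a5*t^5 + t^6 * (fun _ => (0:ℝ)) t := by
    intro t; simp [uu]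
  obtain ⟨r, hr, h⟩ := uu_pow4 a1 a2 a3 a4 a5
  obtain ⟨r', hr', h'⟩ := mulTrunc hr (PolyFn.const 0) h hu _ _ _ _ _ rfl rfl rfl rfl rfl
  refine ⟨r', hr', fun t => ?_⟩
  have := h' t
  linear_combination this

lemma uu_pow6 (a1 a2 a3 a4 a5 : ℝ) : Tr (fun t => uu a1 a2 a3 a4 a5 t ^ 6)
    (6 * a1)
    (15 * a1^2 + 6 * a2)
    (30 * a1 * a2 + 20 * a1^3 + 6 * a3)
    (30 * a1 * a3 + 60 * a1^2 * a2 + 15 * a1^4 + 15 * a2^2 + 6 * a4)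
    (60 * a1 * a2^2 + 30 * a1 * a4 + 60 * a1^2 * a3 + 60 * a1^3 * a2 + 6 * a1^5 + 30 * a2 * a3 + 6 * a5) := by
  have hu : ∀ t, uu a1 a2 a3 a4 a5 t
      = 1 + a1*t + a2*t^2 + a3*t^3 + a4*t^4 + a5*t^5 + t^6 * (fun _ => (0:ℝ)) t := by
    intro t; simp [uu]
  obtain ⟨r, hr, h⟩ := uu_pow5 a1 a2 a3 a4 a5
  obtain ⟨r', hr', h'⟩ := mulTrunc hr (PolyFn.const 0) h hu _ _ _ _ _ rfl rfl rfl rfl rfl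
  refine ⟨r', hr', fun t => ?_⟩
  have := h' t
  linear_combination this

lemma uu_pow7 (a1 a2 a3 a4 a5 : ℝ) : Tr (fun t => uu a1 a2 a3 a4 a5 t ^ 7)
    (7 * a1)
    (21 * a1^2 + 7 * a2)
    (42 * a1 * a2 + 35 * a1^3 + 7 * a3)
    (42 * a1 * a3 + 105 * a1^2 * a2 + 35 * a1^4 + 21 * a2^2 + 7 * a4)
    (105 * a1 * a2^2 + 42 * a1 * a4 + 105 * a1^2 * a3 + 140 * a1^3 * a2 + 21 * a1^5 + 42 * a2 * a3 + 7 * a5) := by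
  have hu : ∀ t, uu a1 a2 a3 a4 a5 t
      = 1 + a1*t + a2*t^2 + a3*t^3 + a4*t^4 + a5*t^5 + t^6 * (fun _ => (0:ℝ)) t := by
    intro t; simp [uu]
  obtain ⟨r, hr, h⟩ := uu_pow6 a1 a2 a3 a4 a5
  obtain ⟨r', hr', h'⟩ := mulTrunc hr (PolyFn.const 0) h hu _ _ _ _ _ rfl rfl rfl rfl rfl
  refine ⟨r', hr', fun t => ?_⟩
  have := h' t
  linear_combination this

lemma exPhi0 (P01 P02 P03 P04 P05 : ℝ) {r0 : ℝ → ℝ} (hr : PolyFn r0) : ∃ s00 s01 s02 s03, PolyFn s00 ∧ PolyFn s01 ∧ PolyFn s02 ∧ PolyFn s03 ∧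
    ExG (fun t => (P01 * t^5 + P02 * t^6 + P03 * t^7 + P04 * t^8 + P05 * t^9 + r0 t * t^10 + t^4))
      (fun t => (1 + 2 * P04 * t^4 + P05 * t^5 + s00 t * t^6))
      (fun t => (P01 + P05 * t^4 + s01 t * t^5))
      (fun t => (P02 + s02 t * t^4))
      (fun t => (P03 + s03 t * t^3)) := by
  obtain ⟨s00, s01, s02, s03, h0, h1, h2, h3, h⟩ := ExG.lift 0 hr
  refine ⟨s00, s01, s02, s03, h0, h1, h2, h3, ?_⟩
  refine (((((ExG.mono 1 0 0 0).add ((ExG.mono 0 1 0 0).smul P01)).add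
    (((ExG.mono 0 0 1 0).smul P02).add ((ExG.mono 0 0 0 1).smul P03))).add
    (((ExG.mono 2 0 0 0).smul P04).add ((ExG.mono 1 1 0 0).smul P05))).add h).congr ?_ ?_ ?_ ?_ ?_
  all_goals intro t; (try simp only [Nat.reduceSub, Nat.cast_ofNat, Nat.cast_one, Nat.cast_zero]); ring

lemma exPhi1 (P11 P12 P13 P14 P15 : ℝ) {r1 : ℝ → ℝ} (hr : PolyFn r1) : ∃ s10 s11 s12 s13, PolyFn s10 ∧ PolyFn s11 ∧ PolyFn s12 ∧ PolyFn s13 ∧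
    ExG (fun t => (P11 * t^6 + P12 * t^7 + P13 * t^8 + P14 * t^9 + P15 * t^10 + r1 t * t^11 + t^5))
      (fun t => (2 * P13 * t^4 + P14 * t^5 + P15 * t^6 + s10 t * t^7))
      (fun t => (1 + P14 * t^4 + s11 t * t^6))
      (fun t => (P11 + P15 * t^4 + s12 t * t^5))
      (fun t => (P12 + s13 t * t^4)) := by
  obtain ⟨s10, s11, s12, s13, h0, h1, h2, h3, h⟩ := ExG.lift 1 hr
  refine ⟨s10, s11, s12, s13, h0, h1, h2, h3, ?_⟩
  refine (((((ExG.mono 0 1 0 0).add ((ExG.mono 0 0 1 0).smul P11)).add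
    (((ExG.mono 0 0 0 1).smul P12).add ((ExG.mono 2 0 0 0).smul P13))).add
    (((ExG.mono 1 1 0 0).smul P14).add ((ExG.mono 1 0 1 0).smul P15))).add h).congr ?_ ?_ ?_ ?_ ?_
  all_goals intro t; (try simp only [Nat.reduceSub, Nat.cast_ofNat, Nat.cast_one, Nat.cast_zero]); ring

lemma exPhi2 (P21 P22 P23 P24 P25 : ℝ) {r2 : ℝ → ℝ} (hr : PolyFn r2) : ∃ s20 s21 s22 s23, PolyFn s20 ∧ PolyFn s21 ∧ PolyFn s22 ∧ PolyFn s23 ∧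
    ExG (fun t => (P21 * t^7 + P22 * t^8 + P23 * t^9 + P24 * t^10 + P25 * t^11 + r2 t * t^12 + t^6))
      (fun t => (2 * P22 * t^4 + P23 * t^5 + P24 * t^6 + P25 * t^7 + s20 t * t^8))
      (fun t => (P23 * t^4 + s21 t * t^7))
      (fun t => (1 + P24 * t^4 + s22 t * t^6))
      (fun t => (P21 + P25 * t^4 + s23 t * t^5)) := by
  obtain ⟨s20, s21, s22, s23, h0, h1, h2, h3, h⟩ := ExG.lift 2 hr
  refine ⟨s20, s21, s22, s23, h0, h1, h2, h3, ?_⟩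
  refine (((((ExG.mono 0 0 1 0).add ((ExG.mono 0 0 0 1).smul P21)).add
    (((ExG.mono 2 0 0 0).smul P22).add ((ExG.mono 1 1 0 0).smul P23))).add
    (((ExG.mono 1 0 1 0).smul P24).add ((ExG.mono 1 0 0 1).smul P25))).add h).congr ?_ ?_ ?_ ?_ ?_
  all_goals intro t; (try simp only [Nat.reduceSub, Nat.cast_ofNat, Nat.cast_one, Nat.cast_zero]); ring

lemma exPhi3 (P31 P32 P33 P34 P35 : ℝ) {r3 : ℝ → ℝ} (hr : PolyFn r3) : ∃ s30 s31 s32 s33, PolyFn s30 ∧ PolyFn s31 ∧ PolyFn s32 ∧ PolyFn s33 ∧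
    ExG (fun t => (P31 * t^8 + P32 * t^9 + P33 * t^10 + P34 * t^11 + P35 * t^12 + r3 t * t^13 + t^7))
      (fun t => (2 * P31 * t^4 + P32 * t^5 + P33 * t^6 + P34 * t^7 + 3 * P35 * t^8 + s30 t * t^9))
      (fun t => (P32 * t^4 + s31 t * t^8))
      (fun t => (P33 * t^4 + s32 t * t^7))
      (fun t => (1 + P34 * t^4 + s33 t * t^6)) := by
  obtain ⟨s30, s31, s32, s33, h0, h1, h2, h3, h⟩ := ExG.lift 3 hr
  refine ⟨s30, s31, s32, s33, h0, h1, h2, h3, ?_⟩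
  refine (((((ExG.mono 0 0 0 1).add ((ExG.mono 2 0 0 0).smul P31)).add
    (((ExG.mono 1 1 0 0).smul P32).add ((ExG.mono 1 0 1 0).smul P33))).add
    (((ExG.mono 1 0 0 1).smul P34).add ((ExG.mono 3 0 0 0).smul P35))).add h).congr ?_ ?_ ?_ ?_ ?_
  all_goals intro t; (try simp only [Nat.reduceSub, Nat.cast_ofNat, Nat.cast_one, Nat.cast_zero]); ring

set_option maxHeartbeats 2000000 in
set_option linter.unusedVariables false in
lemma poly_q0 {r0 r1 r2 r3 s00 s01 s02 s03 s10 s11 s12 s13 s20 s21 s22 s23 s30 s31 s32 s33 : ℝ → ℝ}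
    (hr0 : PolyFn r0)
    (hr1 : PolyFn r1)
    (hr2 : PolyFn r2)
    (hr3 : PolyFn r3)
    (hs00 : PolyFn s00)
    (hs01 : PolyFn s01)
    (hs02 : PolyFn s02)
    (hs03 : PolyFn s03)
    (hs10 : PolyFn s10)
    (hs11 : PolyFn s11)
    (hs12 : PolyFn s12)
    (hs13 : PolyFn s13)
    (hs20 : PolyFn s20)
    (hs21 : PolyFn s21)
    (hs22 : PolyFn s22)
    (hs23 : PolyFn s23)
    (hs30 : PolyFn s30)
    (hs31 : PolyFn s31)
    (hs32 : PolyFn s32)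
    (hs33 : PolyFn s33)
    (P01 P02 P03 P04 P05 P11 P12 P13 P14 P15 P21 P22 P23 P24 P25 P31 P32 P33 P34 P35 A02 A03 A12 A13 A23 : ℝ) :
    PolyFn (fun t => A02 * P01 * P25 + A02 * P01 * s20 t * t + A02 * P02 * P24 + A02 * P02 * P25 * t + A02 * P02 * s20 t * t^2 + A02 * P03 * P23 + A02 * P03 * P24 * t + A02 * P03 * P25 * t^2 + A02 * P03 * s20 t * t^3 + 2 * A02 * P04 * P22 + A02 * P04 * P23 * t + A02 * P04 * P24 * t^2 + A02 * P04 * P25 * t^3 + A02 * P04 * s20 t * t^4 + 2 * A02 * P05 * P22 * t + A02 * P05 * P23 * t^2 + A02 * P05 * P24 * t^3 + A02 * P05 * P25 * t^4 + A02 * P05 * s20 t * t^5 + 2 * A02 * P22 * r0 t * t^2 + A02 * P23 * r0 t * t^3 + A02 * P24 * r0 t * t^4 + A02 * P25 * r0 t * t^5 + A02 * r0 t * s20 t * t^6 + A02 * s20 t + A03 * P01 * P34 + 3 * A03 * P01 * P35 * t + A03 * P01 * s30 t * t^2 + A03 * P02 * P33 + A03 * P02 * P34 * t + 3 * A03 *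 P02 * P35 * t^2 + A03 * P02 * s30 t * t^3 + A03 * P03 * P32 + A03 * P03 * P33 * t + A03 * P03 * P34 * t^2 + 3 * A03 * P03 * P35 * t^3 + A03 * P03 * s30 t * t^4 + 2 * A03 * P04 * P31 + A03 * P04 * P32 * t + A03 * P04 * P33 * t^2 + A03 * P04 * P34 * t^3 + 3 * A03 * P04 * P35 * t^4 + A03 * P04 * s30 t * t^5 + 2 * A03 * P05 * P31 * t + A03 * P05 * P32 * t^2 + A03 * P05 * P33 * t^3 + A03 * P05 * P34 * t^4 + 3 * A03 * P05 * P35 * t^5 + A03 * P05 * s30 t * t^6 + 2 * A03 * P31 * r0 t * t^2 + A03 * P32 * r0 t * t^3 + A03 * P33 * r0 t * t^4 + A03 * P34 * r0 t * t^5 + 3 * A03 * P35 + 3 * A03 * P35 * r0 t * t^6 + A03 * r0 t * s30 t * t^7 + A03 * s30 t * t + A12 * P11 * P24 + A12 * P11 * P25 * t + A12 * P11 * s20 t * t^2 + A12 * P12 * P23 + A12 * P12 * P24 * t + A12 * P12 * P25 * t^2 + A12 * P12 * s20 t * t^3 + 2 * A12 * P13 * P22 + A12 * P13 * P23 * t +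 A12 * P13 * P24 * t^2 + A12 * P13 * P25 * t^3 + A12 * P13 * s20 t * t^4 + 2 * A12 * P14 * P22 * t + A12 * P14 * P23 * t^2 + A12 * P14 * P24 * t^3 + A12 * P14 * P25 * t^4 + A12 * P14 * s20 t * t^5 + 2 * A12 * P15 * P22 * t^2 + A12 * P15 * P23 * t^3 + A12 * P15 * P24 * t^4 + A12 * P15 * P25 * t^5 + A12 * P15 * s20 t * t^6 + 2 * A12 * P22 * r1 t * t^3 + A12 * P23 * r1 t * t^4 + A12 * P24 * r1 t * t^5 + A12 * P25 + A12 * P25 * r1 t * t^6 + A12 * r1 t * s20 t * t^7 + A12 * s20 t * t + A13 * P11 * P33 + A13 * P11 * P34 * t + 3 * A13 * P11 * P35 * t^2 + A13 * P11 * s30 t * t^3 + A13 * P12 * P32 + A13 * P12 * P33 * t + A13 * P12 * P34 * t^2 + 3 * A13 * P12 * P35 * t^3 + A13 * P12 * s30 t * t^4 + 2 * A13 * P13 * P31 + A13 * P13 * P32 * t + A13 * P13 * P33 * t^2 + A13 * P13 * P34 * t^3 + 3 * A13 * P13 * P35 * t^4 + A13 * P13 * s30 t * t^5 + 2 * A13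 * P14 * P31 * t + A13 * P14 * P32 * t^2 + A13 * P14 * P33 * t^3 + A13 * P14 * P34 * t^4 + 3 * A13 * P14 * P35 * t^5 + A13 * P14 * s30 t * t^6 + 2 * A13 * P15 * P31 * t^2 + A13 * P15 * P32 * t^3 + A13 * P15 * P33 * t^4 + A13 * P15 * P34 * t^5 + 3 * A13 * P15 * P35 * t^6 + A13 * P15 * s30 t * t^7 + 2 * A13 * P31 * r1 t * t^3 + A13 * P32 * r1 t * t^4 + A13 * P33 * r1 t * t^5 + A13 * P34 + A13 * P34 * r1 t * t^6 + 3 * A13 * P35 * r1 t * t^7 + 3 * A13 * P35 * t + A13 * r1 t * s30 t * t^8 + A13 * s30 t * t^2 + A23 * P21 * P32 + A23 * P21 * P33 * t + A23 * P21 * P34 * t^2 + 3 * A23 * P21 * P35 * t^3 + A23 * P21 * s30 t * t^4 + 2 * A23 * P22 * P31 + A23 * P22 * P32 * t + A23 * P22 * P33 * t^2 + A23 * P22 * P34 * t^3 + 3 * A23 * P22 * P35 * t^4 + A23 * P22 * s30 t * t^5 + 2 * A23 * P23 * P31 * t + A23 * P23 * P32 * t^2 + A23 * P23 * P33 * t^3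 + A23 * P23 * P34 * t^4 + 3 * A23 * P23 * P35 * t^5 + A23 * P23 * s30 t * t^6 + 2 * A23 * P24 * P31 * t^2 + A23 * P24 * P32 * t^3 + A23 * P24 * P33 * t^4 + A23 * P24 * P34 * t^5 + 3 * A23 * P24 * P35 * t^6 + A23 * P24 * s30 t * t^7 + 2 * A23 * P25 * P31 * t^3 + A23 * P25 * P32 * t^4 + A23 * P25 * P33 * t^5 + A23 * P25 * P34 * t^6 + 3 * A23 * P25 * P35 * t^7 + A23 * P25 * s30 t * t^8 + 2 * A23 * P31 * r2 t * t^4 + A23 * P32 * r2 t * t^5 + A23 * P33 + A23 * P33 * r2 t * t^6 + A23 * P34 * r2 t * t^7 + A23 * P34 * t + 3 * A23 * P35 * r2 t * t^8 + 3 * A23 * P35 * t^2 + A23 * r2 t * s30 t * t^9 + A23 * s30 t * t^3) := by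
  repeat with_reducible first | apply PolyFn.add | apply PolyFn.mul | assumption | exact PolyFn.id | exact PolyFn.const _ | apply PolyFn.pow

set_option maxHeartbeats 2000000 in
set_option linter.unusedVariables false in
lemma poly_q1 {r0 r1 r2 r3 s00 s01 s02 s03 s10 s11 s12 s13 s20 s21 s22 s23 s30 s31 s32 s33 : ℝ → ℝ}
    (hr0 : PolyFn r0)
    (hr1 : PolyFn r1)
    (hr2 : PolyFn r2)
    (hr3 : PolyFn r3)
    (hs00 : PolyFn s00)
    (hs01 : PolyFn s01)
    (hs02 : PolyFn s02)
    (hs03 : PolyFn s03)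
    (hs10 : PolyFn s10)
    (hs11 : PolyFn s11)
    (hs12 : PolyFn s12)
    (hs13 : PolyFn s13)
    (hs20 : PolyFn s20)
    (hs21 : PolyFn s21)
    (hs22 : PolyFn s22)
    (hs23 : PolyFn s23)
    (hs30 : PolyFn s30)
    (hs31 : PolyFn s31)
    (hs32 : PolyFn s32)
    (hs33 : PolyFn s33)
    (P01 P02 P03 P04 P05 P11 P12 P13 P14 P15 P21 P22 P23 P24 P25 P31 P32 P33 P34 P35 A02 A03 A12 A13 A23 : ℝ) :
    PolyFn (fun t => A02 * P01 * s21 t * t + A02 * P02 * s21 t * t^2 + A02 * P03 * P23 + A02 * P03 * s21 t * t^3 + A02 * P04 * P23 * t + A02 * P04 * s21 t * t^4 + A02 * P05 * P23 * t^2 + A02 * P05 * s21 t * t^5 + A02 * P23 * r0 t * t^3 + A02 * r0 t * s21 t * t^6 + A02 * s21 t + A03 * P01 * s31 t * t^2 + A03 * P02 * s31 t * t^3 + A03 * P03 * P32 + A03 * P03 * s31 t * t^4 + A03 * P04 * P32 * t + A03 * P04 * s31 t * t^5 + A03 * P05 * P32 * t^2 + A03 * P05 * s31 t * t^6 + A03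 * P32 * r0 t * t^3 + A03 * r0 t * s31 t * t^7 + A03 * s31 t * t + A12 * P11 * s21 t * t^2 + A12 * P12 * P23 + A12 * P12 * s21 t * t^3 + A12 * P13 * P23 * t + A12 * P13 * s21 t * t^4 + A12 * P14 * P23 * t^2 + A12 * P14 * s21 t * t^5 + A12 * P15 * P23 * t^3 + A12 * P15 * s21 t * t^6 + A12 * P23 * r1 t * t^4 + A12 * r1 t * s21 t * t^7 + A12 * s21 t * t + A13 * P11 * s31 t * t^3 + A13 * P12 * P32 + A13 * P12 * s31 t * t^4 + A13 * P13 * P32 * t + A13 * P13 * s31 t * t^5 + A13 * P14 * P32 * t^2 + A13 * P14 * s31 t * t^6 + A13 * P15 * P32 * t^3 + A13 * P15 * s31 t * t^7 + A13 * P32 * r1 t * t^4 + A13 * r1 t * s31 t * t^8 + A13 * s31 t * t^2 + A23 * P21 * P32 + A23 * P21 * s31 t * t^4 + A23 * P22 * P32 * t + A23 * P22 * s31 t * t^5 + A23 * P23 * P32 * t^2 + A23 * P23 * s31 t * t^6 + A23 * P24 * P32 * t^3 + A23 * P24 * s31 t * t^7 + A23 * P25 * P32 * t^4 + A23 * P25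 * s31 t * t^8 + A23 * P32 * r2 t * t^5 + A23 * r2 t * s31 t * t^9 + A23 * s31 t * t^3) := by
  repeat with_reducible first | apply PolyFn.add | apply PolyFn.mul | assumption | exact PolyFn.id | exact PolyFn.const _ | apply PolyFn.pow

set_option maxHeartbeats 2000000 in
set_option linter.unusedVariables false in
lemma poly_q2 {r0 r1 r2 r3 s00 s01 s02 s03 s10 s11 s12 s13 s20 s21 s22 s23 s30 s31 s32 s33 : ℝ → ℝ}
    (hr0 : PolyFn r0)
    (hr1 : PolyFn r1)
    (hr2 : PolyFn r2)
    (hr3 : PolyFn r3)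
    (hs00 : PolyFn s00)
    (hs01 : PolyFn s01)
    (hs02 : PolyFn s02)
    (hs03 : PolyFn s03)
    (hs10 : PolyFn s10)
    (hs11 : PolyFn s11)
    (hs12 : PolyFn s12)
    (hs13 : PolyFn s13)
    (hs20 : PolyFn s20)
    (hs21 : PolyFn s21)
    (hs22 : PolyFn s22)
    (hs23 : PolyFn s23)
    (hs30 : PolyFn s30)
    (hs31 : PolyFn s31)
    (hs32 : PolyFn s32)
    (hs33 : PolyFn s33)
    (P01 P02 P03 P04 P05 P11 P12 P13 P14 P15 P21 P22 P23 P24 P25 P31 P32 P33 P34 P35 A02 A03 A12 A13 A23 : ℝ) :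
    PolyFn (fun t => A02 * P01 * s22 t * t + A02 * P02 * P24 + A02 * P02 * s22 t * t^2 + A02 * P03 * P24 * t + A02 * P03 * s22 t * t^3 + A02 * P04 * P24 * t^2 + A02 * P04 * s22 t * t^4 + A02 * P05 * P24 * t^3 + A02 * P05 * s22 t * t^5 + A02 * P24 * r0 t * t^4 + A02 * r0 t + A02 * r0 t * s22 t * t^6 + A02 * s22 t + A03 * P01 * s32 t * t^2 + A03 * P02 * P33 + A03 * P02 * s32 t * t^3 + A03 * P03 * P33 * t + A03 * P03 * s32 t * t^4 + A03 * P04 * P33 * t^2 + A03 * P04 * s32 t * t^5 + A03 * P05 * P33 * t^3 + A03 * P05 * s32 t * t^6 + A03 * P33 * r0 t * t^4 + A03 * r0 t * s32 t * t^7 + A03 * s32 t * t + A12 * P11 * P24 + A12 * P11 * s22 t * t^2 + A12 * P12 * P24 * t + A12 * P12 * s22 t * t^3 + A12 * P13 * P24 * t^2 + A12 * P13 * s22 t * t^4 + A12 * P14 * P24 * t^3 + A12 * P14 * s22 t * t^5 + A12 * P15 + A12 * P15 * P24 * t^4 + A12 * P15 * s22 t * t^6 + A12 * P24 * r1 t *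 t^5 + A12 * r1 t * s22 t * t^7 + A12 * r1 t * t + A12 * s22 t * t + A13 * P11 * P33 + A13 * P11 * s32 t * t^3 + A13 * P12 * P33 * t + A13 * P12 * s32 t * t^4 + A13 * P13 * P33 * t^2 + A13 * P13 * s32 t * t^5 + A13 * P14 * P33 * t^3 + A13 * P14 * s32 t * t^6 + A13 * P15 * P33 * t^4 + A13 * P15 * s32 t * t^7 + A13 * P33 * r1 t * t^5 + A13 * r1 t * s32 t * t^8 + A13 * s32 t * t^2 + A23 * P21 * P33 * t + A23 * P21 * s32 t * t^4 + A23 * P22 * P33 * t^2 + A23 * P22 * s32 t * t^5 + A23 * P23 * P33 * t^3 + A23 * P23 * s32 t * t^6 + A23 * P24 * P33 * t^4 + A23 * P24 * s32 t * t^7 + A23 * P25 * P33 * t^5 + A23 * P25 * s32 t * t^8 + A23 * P33 + A23 * P33 * r2 t * t^6 + A23 * r2 t * s32 t * t^9 + A23 * s32 t * t^3) := by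
  repeat with_reducible first | apply PolyFn.add | apply PolyFn.mul | assumption | exact PolyFn.id | exact PolyFn.const _ | apply PolyFn.pow

set_option maxHeartbeats 2000000 in
set_option linter.unusedVariables false in
lemma poly_q3 {r0 r1 r2 r3 s00 s01 s02 s03 s10 s11 s12 s13 s20 s21 s22 s23 s30 s31 s32 s33 : ℝ → ℝ}
    (hr0 : PolyFn r0)
    (hr1 : PolyFn r1)
    (hr2 : PolyFn r2)
    (hr3 : PolyFn r3)
    (hs00 : PolyFn s00)
    (hs01 : PolyFn s01)
    (hs02 : PolyFn s02)
    (hs03 : PolyFn s03)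
    (hs10 : PolyFn s10)
    (hs11 : PolyFn s11)
    (hs12 : PolyFn s12)
    (hs13 : PolyFn s13)
    (hs20 : PolyFn s20)
    (hs21 : PolyFn s21)
    (hs22 : PolyFn s22)
    (hs23 : PolyFn s23)
    (hs30 : PolyFn s30)
    (hs31 : PolyFn s31)
    (hs32 : PolyFn s32)
    (hs33 : PolyFn s33)
    (P01 P02 P03 P04 P05 P11 P12 P13 P14 P15 P21 P22 P23 P24 P25 P31 P32 P33 P34 P35 A02 A03 A12 A13 A23 : ℝ) :
    PolyFn (fun t => A02 * P01 * P25 + A02 * P01 * s23 t * t + A02 * P02 * P25 * t + A02 * P02 * s23 t * t^2 + A02 * P03 * P25 * t^2 + A02 * P03 * s23 t * t^3 + A02 * P04 * P25 * t^3 + A02 * P04 * s23 t * t^4 + A02 * P05 * P21 + A02 * P05 * P25 * t^4 + A02 * P05 * s23 t * t^5 + A02 * P21 * r0 t * t + A02 * P25 * r0 t * t^5 + A02 * r0 t * s23 t * t^6 + A02 * s23 t + A03 * P01 * P34 + A03 * P01 * s33 t * t^2 + A03 * P02 * P34 * t + A03 * P02 * s33 t * t^3 + A03 * P03 * P34 *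 t^2 + A03 * P03 * s33 t * t^4 + A03 * P04 * P34 * t^3 + A03 * P04 * s33 t * t^5 + A03 * P05 + A03 * P05 * P34 * t^4 + A03 * P05 * s33 t * t^6 + A03 * P34 * r0 t * t^5 + A03 * r0 t * s33 t * t^7 + A03 * r0 t * t + A03 * s33 t * t + A12 * P11 * P25 * t + A12 * P11 * s23 t * t^2 + A12 * P12 * P25 * t^2 + A12 * P12 * s23 t * t^3 + A12 * P13 * P25 * t^3 + A12 * P13 * s23 t * t^4 + A12 * P14 * P21 + A12 * P14 * P25 * t^4 + A12 * P14 * s23 t * t^5 + A12 * P15 * P21 * t + A12 * P15 * P25 * t^5 + A12 * P15 * s23 t * t^6 + A12 * P21 * r1 t * t^2 + A12 * P25 + A12 * P25 * r1 t * t^6 + A12 * r1 t * s23 t * t^7 + A12 * s23 t * t + A13 * P11 * P34 * t + A13 * P11 * s33 t * t^3 + A13 * P12 * P34 * t^2 + A13 * P12 * s33 t * t^4 + A13 * P13 * P34 * t^3 + A13 * P13 * s33 t * t^5 + A13 * P14 + A13 * P14 * P34 * t^4 + A13 * P14 * s33 t * t^6 + A13 * P15 * P34 * t^5 + A13 * P15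 * s33 t * t^7 + A13 * P15 * t + A13 * P34 + A13 * P34 * r1 t * t^6 + A13 * r1 t * s33 t * t^8 + A13 * r1 t * t^2 + A13 * s33 t * t^2 + A23 * P21 * P34 * t^2 + A23 * P21 * s33 t * t^4 + A23 * P22 * P34 * t^3 + A23 * P22 * s33 t * t^5 + A23 * P23 + A23 * P23 * P34 * t^4 + A23 * P23 * s33 t * t^6 + A23 * P24 * P34 * t^5 + A23 * P24 * s33 t * t^7 + A23 * P24 * t + A23 * P25 * P34 * t^6 + A23 * P25 * s33 t * t^8 + A23 * P25 * t^2 + A23 * P34 * r2 t * t^7 + A23 * P34 * t + A23 * r2 t * s33 t * t^9 + A23 * r2 t * t^3 + A23 * s33 t * t^3) := by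
  repeat with_reducible first | apply PolyFn.add | apply PolyFn.mul | assumption | exact PolyFn.id | exact PolyFn.const _ | apply PolyFn.pow

set_option maxHeartbeats 1000000 in
lemma exF {r0 r1 r2 r3 s00 s01 s02 s03 s10 s11 s12 s13 s20 s21 s22 s23 s30 s31 s32 s33 : ℝ → ℝ}
    (hr0 : PolyFn r0)
    (hr1 : PolyFn r1)
    (hr2 : PolyFn r2)
    (hr3 : PolyFn r3)
    (hs00 : PolyFn s00)
    (hs01 : PolyFn s01)
    (hs02 : PolyFn s02)
    (hs03 : PolyFn s03)
    (hs10 : PolyFn s10)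
    (hs11 : PolyFn s11)
    (hs12 : PolyFn s12)
    (hs13 : PolyFn s13)
    (hs20 : PolyFn s20)
    (hs21 : PolyFn s21)
    (hs22 : PolyFn s22)
    (hs23 : PolyFn s23)
    (hs30 : PolyFn s30)
    (hs31 : PolyFn s31)
    (hs32 : PolyFn s32)
    (hs33 : PolyFn s33)
    (P01 P02 P03 P04 P05 P11 P12 P13 P14 P15 P21 P22 P23 P24 P25 P31 P32 P33 P34 P35 A02 A03 A12 A13 A23 : ℝ)
    (f0002 f0011 f0020 f0300 f1110 f1200 f2001 f2010 f2100 f3000 : ℝ)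
    (hf120 : 2 * A02 * P22 + 2 * A03 * P31 = 3 * f3000)
    (hf130 : 2 * A02 * P01 * P22 + A02 * P23 + 2 * A03 * P01 * P31 + A03 * P32 + 2 * A12 * P22 + 2 * A13 * P31 = 2 * f2100)
    (hf140 : A02 * P01 * P23 + 2 * A02 * P02 * P22 + A02 * P24 + A03 * P01 * P32 + 2 * A03 * P02 * P31 + A03 * P33 + 2 * A12 * P11 * P22 + A12 * P23 + 2 * A13 * P11 * P31 + A13 * P32 + 2 * A23 * P31 = f1200 + 2 * f2010)
    (hf150 : A02 * P01 * P24 + A02 * P02 * P23 + 2 * A02 * P03 * P22 + A02 * P25 + A03 * P01 * P33 + A03 * P02 * P32 + 2 * A03 * P03 * P31 + A03 * P34 + A12 * P11 * P23 + 2 * A12 * P12 * P22 + A12 * P24 + A13 * P11 * P32 + 2 * A13 * P12 * P31 + A13 * P33 + 2 * A23 * P21 * P31 + A23 * P32 = f1110 + 2 * f2001)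
    (hf131 : A02 * P23 + A03 * P32 = f2100)
    (hf141 : A02 * P01 * P23 + A03 * P01 * P32 + A12 * P23 + A13 * P32 = 2 * f1200)
    (hf151 : A02 * P02 * P23 + A03 * P02 * P32 + A12 * P11 * P23 + A13 * P11 * P32 + A23 * P32 = 3 * f0300 + f1110)
    (hf112 : A02 * P01 = 0)
    (hf122 : A02 * P02 + A12 * P11 = 2 * f0020)
    (hf132 : A02 * P03 + A12 * P12 = f0011)
    (hf142 : A02 * P04 + A02 * P24 + A03 * P33 + A12 * P13 = f2010)
    (hf152 : A02 * P01 * P24 + A02 * P05 + A03 * P01 * P33 + A12 * P14 + A12 * P24 + A13 * P33 = f1110)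
    (hf113 : A02 * P21 = 0)
    (hf123 : A02 * P01 * P21 + A03 * P01 + A12 * P21 = 0)
    (hf133 : A02 * P02 * P21 + A03 * P02 + A12 * P11 * P21 + A13 * P11 + A23 = f0011)
    (hf143 : A02 * P03 * P21 + A03 * P03 + A12 * P12 * P21 + A13 * P12 + A23 * P21 = 2 * f0002)
    (hf153 : A02 * P04 * P21 + A02 * P25 + A03 * P04 + A03 * P34 + A12 * P13 * P21 + A13 * P13 + A23 * P22 = f2001) :
    ∃ a, ExG a
      (fun t => A02 * ((P01 * t^5 + P02 * t^6 + P03 * t^7 + P04 * t^8 + P05 * t^9 + r0 t * t^10 + t^4) * (2 * P22 * t^4 + P23 * t^5 + P24 * t^6 + P25 * t^7 + s20 t * t^8)) + A03 * ((P01 * t^5 + P02 * t^6 + P03 * t^7 + P04 * t^8 + P05 * t^9 + r0 t * t^10 + t^4) * (2 * P31 * t^4 + P32 * t^5 + P33 * t^6 + P34 * t^7 + 3 * P35 * t^8 + s30 t * t^9)) + A12 * ((P11 * t^6 + P12 * t^7 + P13 * t^8 + P14 * t^9 + P15 * t^10 + r1 t * t^11 + t^5) * (2 * P22 * t^4 +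 P23 * t^5 + P24 * t^6 + P25 * t^7 + s20 t * t^8)) + A13 * ((P11 * t^6 + P12 * t^7 + P13 * t^8 + P14 * t^9 + P15 * t^10 + r1 t * t^11 + t^5) * (2 * P31 * t^4 + P32 * t^5 + P33 * t^6 + P34 * t^7 + 3 * P35 * t^8 + s30 t * t^9)) + A23 * ((P21 * t^7 + P22 * t^8 + P23 * t^9 + P24 * t^10 + P25 * t^11 + r2 t * t^12 + t^6) * (2 * P31 * t^4 + P32 * t^5 + P33 * t^6 + P34 * t^7 + 3 * P35 * t^8 + s30 t * t^9)))
      (fun t => A02 * ((P01 * t^5 + P02 * t^6 + P03 * t^7 + P04 * t^8 + P05 * t^9 + r0 t * t^10 + t^4) * (P23 * t^4 + s21 t * t^7)) + A03 * ((P01 * t^5 + P02 * t^6 + P03 * t^7 + P04 * t^8 + P05 * t^9 + r0 t * t^10 + t^4) * (P32 * t^4 + s31 t * t^8)) + A12 * ((P11 * t^6 + P12 * t^7 + P13 * t^8 + P14 * t^9 + P15 * t^10 + r1 t * t^11 + t^5) * (P23 * t^4 + s21 t * t^7)) + A13 * ((P11 * t^6 + P12 * t^7 + P13 * t^8 + P14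 * t^9 + P15 * t^10 + r1 t * t^11 + t^5) * (P32 * t^4 + s31 t * t^8)) + A23 * ((P21 * t^7 + P22 * t^8 + P23 * t^9 + P24 * t^10 + P25 * t^11 + r2 t * t^12 + t^6) * (P32 * t^4 + s31 t * t^8)))
      (fun t => A02 * ((P01 * t^5 + P02 * t^6 + P03 * t^7 + P04 * t^8 + P05 * t^9 + r0 t * t^10 + t^4) * (1 + P24 * t^4 + s22 t * t^6)) + A03 * ((P01 * t^5 + P02 * t^6 + P03 * t^7 + P04 * t^8 + P05 * t^9 + r0 t * t^10 + t^4) * (P33 * t^4 + s32 t * t^7)) + A12 * ((P11 * t^6 + P12 * t^7 + P13 * t^8 + P14 * t^9 + P15 * t^10 + r1 t * t^11 + t^5) * (1 + P24 * t^4 + s22 t * t^6)) + A13 * ((P11 * t^6 + P12 * t^7 + P13 * t^8 + P14 * t^9 + P15 * t^10 + r1 t * t^11 + t^5) * (P33 * t^4 + s32 t * t^7)) + A23 * ((P21 * t^7 + P22 * t^8 + P23 * t^9 + P24 * t^10 + P25 * t^11 + r2 t * t^12 + t^6) * (P33 * t^4 + s32 t * t^7)) - A02 * t^4 - A12 * 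t^5)
      (fun t => A02 * ((P01 * t^5 + P02 * t^6 + P03 * t^7 + P04 * t^8 + P05 * t^9 + r0 t * t^10 + t^4) * (P21 + P25 * t^4 + s23 t * t^5)) + A03 * ((P01 * t^5 + P02 * t^6 + P03 * t^7 + P04 * t^8 + P05 * t^9 + r0 t * t^10 + t^4) * (1 + P34 * t^4 + s33 t * t^6)) + A12 * ((P11 * t^6 + P12 * t^7 + P13 * t^8 + P14 * t^9 + P15 * t^10 + r1 t * t^11 + t^5) * (P21 + P25 * t^4 + s23 t * t^5)) + A13 * ((P11 * t^6 + P12 * t^7 + P13 * t^8 + P14 * t^9 + P15 * t^10 + r1 t * t^11 + t^5) * (1 + P34 * t^4 + s33 t * t^6)) + A23 * ((P21 * t^7 + P22 * t^8 + P23 * t^9 + P24 * t^10 + P25 * t^11 + r2 t * t^12 + t^6) * (1 + P34 * t^4 + s33 t * t^6)) - A03 * t^4 - A13 * t^5) := by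
  obtain ⟨a, h⟩ := ExG.tail
    (poly_q0 hr0 hr1 hr2 hr3 hs00 hs01 hs02 hs03 hs10 hs11 hs12 hs13 hs20 hs21 hs22 hs23 hs30 hs31 hs32 hs33 P01 P02 P03 P04 P05 P11 P12 P13 P14 P15 P21 P22 P23 P24 P25 P31 P32 P33 P34 P35 A02 A03 A12 A13 A23)
    (poly_q1 hr0 hr1 hr2 hr3 hs00 hs01 hs02 hs03 hs10 hs11 hs12 hs13 hs20 hs21 hs22 hs23 hs30 hs31 hs32 hs33 P01 P02 P03 P04 P05 P11 P12 P13 P14 P15 P21 P22 P23 P24 P25 P31 P32 P33 P34 P35 A02 A03 A12 A13 A23)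
    (poly_q2 hr0 hr1 hr2 hr3 hs00 hs01 hs02 hs03 hs10 hs11 hs12 hs13 hs20 hs21 hs22 hs23 hs30 hs31 hs32 hs33 P01 P02 P03 P04 P05 P11 P12 P13 P14 P15 P21 P22 P23 P24 P25 P31 P32 P33 P34 P35 A02 A03 A12 A13 A23)
    (poly_q3 hr0 hr1 hr2 hr3 hs00 hs01 hs02 hs03 hs10 hs11 hs12 hs13 hs20 hs21 hs22 hs23 hs30 hs31 hs32 hs33 P01 P02 P03 P04 P05 P11 P12 P13 P14 P15 P21 P22 P23 P24 P25 P31 P32 P33 P34 P35 A02 A03 A12 A13 A23)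
  refine ⟨_, (((((((((((h.add
    ((ExG.mono 0 0 0 2).smul f0002)).add
    ((ExG.mono 0 0 1 1).smul f0011)).add
    ((ExG.mono 0 0 2 0).smul f0020)).add
    ((ExG.mono 0 3 0 0).smul f0300)).add
    ((ExG.mono 1 1 1 0).smul f1110)).add
    ((ExG.mono 1 2 0 0).smul f1200)).add
    ((ExG.mono 2 0 0 1).smul f2001)).add
    ((ExG.mono 2 0 1 0).smul f2010)).add
    ((ExG.mono 2 1 0 0).smul f2100)).add
    ((ExG.mono 3 0 0 0).smul f3000))).congr (fun _ => rfl) ?_ ?_ ?_ ?_⟩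
  · intro t
    simp only [Nat.reduceSub, Nat.cast_ofNat, Nat.cast_one, Nat.cast_zero]
    linear_combination - t^8 * hf120 - t^9 * hf130 - t^10 * hf140 - t^11 * hf150
  · intro t
    simp only [Nat.reduceSub, Nat.cast_ofNat, Nat.cast_one, Nat.cast_zero]
    linear_combination - t^8 * hf131 - t^9 * hf141 - t^10 * hf151
  · intro t
    simp only [Nat.reduceSub, Nat.cast_ofNat, Nat.cast_one, Nat.cast_zero]
    linear_combination - t^5 * hf112 - t^6 * hf122 - t^7 * hf132 - t^8 * hf142 - t^9 * hf152
  · intro t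
    simp only [Nat.reduceSub, Nat.cast_ofNat, Nat.cast_one, Nat.cast_zero]
    linear_combination - t^4 * hf113 - t^5 * hf123 - t^6 * hf133 - t^7 * hf143 - t^8 * hf153


lemma g4567_0 (t : ℝ) : g4567 t 0 = t ^ 4 := rfl
lemma g4567_1 (t : ℝ) : g4567 t 1 = t ^ 5 := rfl

lemma core (a1 a2 a3 a4 a5 : ℝ) (P01 P02 P03 P04 P05 P11 P12 P13 P14 P15 P21 P22 P23 P24 P25 P31 P32 P33 P34 P35 : ℝ) (A02 A03 A12 A13 A23 : ℝ)
    (f0002 f0011 f0020 f0300 f1110 f1200 f2001 f2010 f2100 f3000 : ℝ)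
    (ht0 : Tr (fun t => uu a1 a2 a3 a4 a5 t ^ 4) P01 P02 P03 P04 P05)
    (ht1 : Tr (fun t => uu a1 a2 a3 a4 a5 t ^ 5) P11 P12 P13 P14 P15)
    (ht2 : Tr (fun t => uu a1 a2 a3 a4 a5 t ^ 6) P21 P22 P23 P24 P25)
    (ht3 : Tr (fun t => uu a1 a2 a3 a4 a5 t ^ 7) P31 P32 P33 P34 P35)
    (hf120 : 2 * A02 * P22 + 2 * A03 * P31 = 3 * f3000)
    (hf130 : 2 * A02 * P01 * P22 + A02 * P23 + 2 * A03 * P01 * P31 + A03 * P32 + 2 * A12 * P22 + 2 * A13 * P31 = 2 * f2100)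
    (hf140 : A02 * P01 * P23 + 2 * A02 * P02 * P22 + A02 * P24 + A03 * P01 * P32 + 2 * A03 * P02 * P31 + A03 * P33 + 2 * A12 * P11 * P22 + A12 * P23 + 2 * A13 * P11 * P31 + A13 * P32 + 2 * A23 * P31 = f1200 + 2 * f2010)
    (hf150 : A02 * P01 * P24 + A02 * P02 * P23 + 2 * A02 * P03 * P22 + A02 * P25 + A03 * P01 * P33 + A03 * P02 * P32 + 2 * A03 * P03 * P31 + A03 * P34 + A12 * P11 * P23 + 2 * A12 * P12 * P22 + A12 * P24 + A13 * P11 * P32 + 2 * A13 * P12 * P31 + A13 * P33 + 2 * A23 * P21 * P31 + A23 * P32 = f1110 + 2 * f2001)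
    (hf131 : A02 * P23 + A03 * P32 = f2100)
    (hf141 : A02 * P01 * P23 + A03 * P01 * P32 + A12 * P23 + A13 * P32 = 2 * f1200)
    (hf151 : A02 * P02 * P23 + A03 * P02 * P32 + A12 * P11 * P23 + A13 * P11 * P32 + A23 * P32 = 3 * f0300 + f1110)
    (hf112 : A02 * P01 = 0)
    (hf122 : A02 * P02 + A12 * P11 = 2 * f0020)
    (hf132 : A02 * P03 + A12 * P12 = f0011)
    (hf142 : A02 * P04 + A02 * P24 + A03 * P33 + A12 * P13 = f2010)
    (hf152 : A02 * P01 * P24 + A02 * P05 + A03 * P01 * P33 + A12 * P14 + A12 * P24 + A13 * P33 = f1110)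
    (hf113 : A02 * P21 = 0)
    (hf123 : A02 * P01 * P21 + A03 * P01 + A12 * P21 = 0)
    (hf133 : A02 * P02 * P21 + A03 * P02 + A12 * P11 * P21 + A13 * P11 + A23 = f0011)
    (hf143 : A02 * P03 * P21 + A03 * P03 + A12 * P12 * P21 + A13 * P12 + A23 * P21 = 2 * f0002)
    (hf153 : A02 * P04 * P21 + A02 * P25 + A03 * P04 + A03 * P34 + A12 * P13 * P21 + A13 * P13 + A23 * P22 = f2001) :
    ∃ (Φ : (Fin 4 → ℝ) → (Fin 4 → ℝ)) (φ : ℝ → ℝ),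
        IsDiffeoGerm 4 Φ ∧ IsDiffeoGerm1 φ ∧
        (∀ᶠ t in 𝓝 (0 : ℝ), Φ (g4567 t) = g4567 (φ t)) ∧
        SameAR2 4
          (pull2 4 Φ (fun x u v => A02 * wedge 4 0 2 x u v + A03 * wedge 4 0 3 x u v
            + A12 * wedge 4 1 2 x u v + A13 * wedge 4 1 3 x u v + A23 * wedge 4 2 3 x u v))
          (fun x u v => A02 * wedge 4 0 2 x u v + A03 * wedge 4 0 3 x u v
            + A12 * wedge 4 1 2 x u v + A13 * wedge 4 1 3 x u v)
          g4567 := by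
  obtain ⟨r0, hr0, hu0⟩ := ht0
  obtain ⟨r1, hr1, hu1⟩ := ht1
  obtain ⟨r2, hr2, hu2⟩ := ht2
  obtain ⟨r3, hr3, hu3⟩ := ht3
  obtain ⟨s00, s01, s02, s03, hs00, hs01, hs02, hs03, F0, cF0, hF0⟩ := exPhi0 P01 P02 P03 P04 P05 hr0
  obtain ⟨s10, s11, s12, s13, hs10, hs11, hs12, hs13, F1, cF1, hF1⟩ := exPhi1 P11 P12 P13 P14 P15 hr1
  obtain ⟨s20, s21, s22, s23, hs20, hs21, hs22, hs23, F2, cF2, hF2⟩ := exPhi2 P21 P22 P23 P24 P25 hr2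
  obtain ⟨s30, s31, s32, s33, hs30, hs31, hs32, hs33, F3, cF3, hF3⟩ := exPhi3 P31 P32 P33 P34 P35 hr3
  obtain ⟨_, F, cF, hF⟩ := exF hr0 hr1 hr2 hr3 hs00 hs01 hs02 hs03 hs10 hs11 hs12 hs13 hs20 hs21 hs22 hs23 hs30 hs31 hs32 hs33 P01 P02 P03 P04 P05 P11 P12 P13 P14 P15 P21 P22 P23 P24 P25 P31 P32 P33 P34 P35 A02 A03 A12 A13 A23 f0002 f0011 f0020 f0300 f1110 f1200 f2001 f2010 f2100 f3000
    hf120 hf130 hf140 hf150 hf131 hf141 hf151 hf112 hf122 hf132 hf142 hf152 hf113 hf123 hf133 hf143 hf153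
  have hg0 : g4567 0 = 0 := by
    funext i; fin_cases i <;> simp [g4567]
  have dF0 : Differentiable ℝ F0 := cF0.differentiable (by simp)
  have dF1 : Differentiable ℝ F1 := cF1.differentiable (by simp)
  have dF2 : Differentiable ℝ F2 := cF2.differentiable (by simp)
  have dF3 : Differentiable ℝ F3 := cF3.differentiable (by simp)
  have hΦ : ∀ x, HasFDerivAt (fun x => ![F0 x, F1 x, F2 x, F3 x])
      (ContinuousLinearMap.pi ![fderiv ℝ F0 x, fderiv ℝ F1 x, fderiv ℝ F2 x, fderiv ℝ F3 x]) x := by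
    intro x
    rw [hasFDerivAt_pi']
    intro i
    fin_cases i
    · exact (dF0 x).hasFDerivAt
    · exact (dF1 x).hasFDerivAt
    · exact (dF2 x).hasFDerivAt
    · exact (dF3 x).hasFDerivAt
  refine ⟨fun x => ![F0 x, F1 x, F2 x, F3 x], fun t => t * uu a1 a2 a3 a4 a5 t, ?_, ?_, ?_, ?_⟩
  · have e0 := hF0 0
    have e1 := hF1 0
    have e2 := hF2 0
    have e3 := hF3 0
    rw [hg0] at e0 e1 e2 e3
    refine ⟨?_, ⟨Set.univ, univ_mem, ContDiff.contDiffOn ?_⟩, ?_⟩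
    · funext i
      fin_cases i
      · simpa using e0.1
      · simpa using e1.1
      · simpa using e2.1
      · simpa using e3.1
    · rw [contDiff_pi]
      intro i
      fin_cases i
      · exact cF0
      · exact cF1
      · exact cF2
      · exact cF3
    · set T := ContinuousLinearMap.pi ![fderiv ℝ F0 0, fderiv ℝ F1 0, fderiv ℝ F2 0, fderiv ℝ F3 0]
        with hT
      have hinj : Function.Injective T.toLinearMap := by
        rw [← LinearMap.ker_eq_bot, LinearMap.ker_eq_bot']
        intro v hv
        have k0 : fderiv ℝ F0 0 v = 0 := congrFun hv 0
        have k1 : fderiv ℝ F1 0 v = 0 := congrFun hv 1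
        have k2 : fderiv ℝ F2 0 v = 0 := congrFun hv 2
        have k3 : fderiv ℝ F3 0 v = 0 := congrFun hv 3
        rw [e0.2] at k0
        rw [e1.2] at k1
        rw [e2.2] at k2
        rw [e3.2] at k3
        norm_num at k0 k1 k2 k3
        rw [k3] at k2 k1 k0
        norm_num at k2
        rw [k2] at k1 k0
        norm_num at k1
        rw [k1] at k0
        norm_num at k0
        funext i
        fin_cases i
        · exact k0
        · exact k1
        · exact k2
        · exact k3
      refine ⟨(LinearEquiv.ofInjectiveEndo T.toLinearMap hinj).toContinuousLinearEquiv, ?_⟩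
      have := hΦ 0
      rw [← hT] at this
      have hTT : (((LinearEquiv.ofInjectiveEndo T.toLinearMap hinj).toContinuousLinearEquiv :
          (Fin 4 → ℝ) ≃L[ℝ] (Fin 4 → ℝ)) : (Fin 4 → ℝ) →L[ℝ] (Fin 4 → ℝ)) = T :=
        ContinuousLinearMap.ext fun v => rfl
      rw [hTT]
      exact this
  · refine ⟨by simp, ⟨Set.univ, univ_mem, ContDiff.contDiffOn ?_⟩, ?_⟩
    · unfold uu
      fun_prop
    · have : HasDerivAt (fun t => t * uu a1 a2 a3 a4 a5 t) (1 * uu a1 a2 a3 a4 a5 0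
          + 0 * deriv (uu a1 a2 a3 a4 a5) 0) 0 := by
        refine (hasDerivAt_id (0:ℝ)).mul (DifferentiableAt.hasDerivAt ?_)
        unfold uu
        fun_prop
      rw [this.deriv]
      simp [uu]
  · refine Eventually.of_forall fun t => ?_
    funext i
    have u0 := hu0 t
    have u1 := hu1 t
    have u2 := hu2 t
    have u3 := hu3 t
    simp only at u0 u1 u2 u3
    fin_cases i
    · have e := (hF0 t).1
      show F0 (g4567 t) = (t * uu a1 a2 a3 a4 a5 t) ^ 4
      rw [e, mul_pow, u0]
      ring
    · have e := (hF1 t).1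
      show F1 (g4567 t) = (t * uu a1 a2 a3 a4 a5 t) ^ 5
      rw [e, mul_pow, u1]
      ring
    · have e := (hF2 t).1
      show F2 (g4567 t) = (t * uu a1 a2 a3 a4 a5 t) ^ 6
      rw [e, mul_pow, u2]
      ring
    · have e := (hF3 t).1
      show F3 (g4567 t) = (t * uu a1 a2 a3 a4 a5 t) ^ 7
      rw [e, mul_pow, u3]
      ring
  · have cx : ∀ i : Fin 4, ContDiff ℝ (⊤ : ℕ∞) (fun x : Fin 4 → ℝ => x i) := fun i => by fun_prop
    have hp := ((((Prim.adb cF0 cF2 A02).add (Prim.adb cF0 cF3 A03)).add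
      ((Prim.adb cF1 cF2 A12).add (Prim.adb cF1 cF3 A13))).add (Prim.adb cF2 cF3 A23)).add
      (((Prim.adb (cx 0) (cx 2) (-A02)).add (Prim.adb (cx 0) (cx 3) (-A03))).add
      (((Prim.adb (cx 1) (cx 2) (-A12)).add (Prim.adb (cx 1) (cx 3) (-A13))).add
        (Prim.adb contDiff_const cF (-1) (A := fun _ => 1))))
    refine ⟨fun _ _ _ => 0, _, ⟨by simp, by simp, fun u v => ⟨Set.univ, univ_mem, contDiffOn_const⟩⟩,
      ⟨hp.1, fun u => ⟨Set.univ, univ_mem, (hp.2.1 u).contDiffOn⟩⟩,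
      Eventually.of_forall fun t u v => rfl, Eventually.of_forall fun t v => ?_,
      Eventually.of_forall fun x u v => ?_⟩
    · simp only [(hF0 t).1, (hF1 t).1, (hF2 t).1, (hF0 t).2, (hF1 t).2, (hF2 t).2, (hF3 t).2,
        (hF t).2, fderiv_coord]
      simp only [g4567_0, g4567_1]
      ring
    · rw [hp.2.2]
      simp only [fderiv_coord, pull2, wedge, (hΦ x).fderiv, fderiv_fun_const]
      simp
      ring

lemma core2 (a1 a2 a3 a4 a5 : ℝ) (A02 A03 A12 A13 A23 : ℝ)
    (hc130 : 18 * A02 * a1 * a2 + 100 * A02 * a1^3 + (-6) * A02 * a3 + 35 * A03 * a1^2 + (-7) * A03 * a2 + 30 * A12 * a1^2 + 12 * A12 * a2 + 14 * A13 * a1 = 0)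
    (hc140 : (-42) * A02 * a1 * a3 + 168 * A02 * a1^2 * a2 + 203 * A02 * a1^4 + 21 * A02 * a2^2 + (-14) * A02 * a4 + 28 * A03 * a1 * a2 + 91 * A03 * a1^3 + (-7) * A03 * a3 + 35 * A12 * a1 * a2 + 140 * A12 * a1^3 + (-7) * A12 * a3 + (161/2) * A13 * a1^2 + (7/2) * A13 * a2 + 14 * A23 * a1 = 0)
    (hc150 : 120 * A02 * a1 * a2^2 + (-90) * A02 * a1 * a4 + (-60) * A02 * a1^2 * a3 + 460 * A02 * a1^3 * a2 + 222 * A02 * a1^5 + 30 * A02 * a2 * a3 + (-10) * A02 * a5 + (-10) * A03 * a1 * a3 + 165 * A03 * a1^2 * a2 + 145 * A03 * a1^4 + (-5) * A03 * a2^2 + (-15) * A03 * a4 + (-50) * A12 * a1 * a3 + 150 * A12 * a1^2 * a2 + 275 * A12 * a1^4 + 50 * A12 * a2^2 + (-5) * A12 * a4 + 65 * A13 * a1 * a2 + 225 * A13 * a1^3 + (-10) * A13 * a3 + 75 * A23 * a1^2 + (-5) * A23 * a2 = 0)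
    (hc112 : 4 * A02 * a1 = 0)
    (hc113 : 6 * A02 * a1 = 0)
    (hc123 : 24 * A02 * a1^2 + 4 * A03 * a1 + 6 * A12 * a1 = 0)
    (hc133 : 12 * A02 * a1 * a2 + 32 * A02 * a1^3 + (-4) * A02 * a3 + 6 * A03 * a1^2 + 4 * A03 * a2 + 20 * A12 * a1^2 + (-5) * A12 * a2 + 5 * A13 * a1 + A23 = 0) :
    ∃ (Φ : (Fin 4 → ℝ) → (Fin 4 → ℝ)) (φ : ℝ → ℝ),
        IsDiffeoGerm 4 Φ ∧ IsDiffeoGerm1 φ ∧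
        (∀ᶠ t in 𝓝 (0 : ℝ), Φ (g4567 t) = g4567 (φ t)) ∧
        SameAR2 4
          (pull2 4 Φ (fun x u v => A02 * wedge 4 0 2 x u v + A03 * wedge 4 0 3 x u v
            + A12 * wedge 4 1 2 x u v + A13 * wedge 4 1 3 x u v + A23 * wedge 4 2 3 x u v))
          (fun x u v => A02 * wedge 4 0 2 x u v + A03 * wedge 4 0 3 x u v
            + A12 * wedge 4 1 2 x u v + A13 * wedge 4 1 3 x u v)
          g4567 :=
  core a1 a2 a3 a4 a5 _ _ _ _ _ _ _ _ _ _ _ _ _ _ _ _ _ _ _ _ A02 A03 A12 A13 A23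
    (12 * A02 * a1 * a3 + 36 * A02 * a1^2 * a2 + 12 * A02 * a1^4 + 6 * A03 * a1 * a2 + 2 * A03 * a1^3 + 2 * A03 * a3 + 15 * A12 * a1 * a2 + 30 * A12 * a1^3 + 5 * A13 * a1^2 + (5/2) * A13 * a2 + 3 * A23 * a1)
    (12 * A02 * a1 * a2 + 4 * A02 * a1^3 + 4 * A02 * a3 + 10 * A12 * a1^2 + 5 * A12 * a2)
    (3 * A02 * a1^2 + 2 * A02 * a2 + (5/2) * A12 * a1)
    (16 * A02 * a1 * a2^2 + (-12) * A02 * a1 * a4 + (-32) * A02 * a1^2 * a3 + (16/3) * A02 * a1^3 * a2 + 20 * A02 * a1^5 + 4 * A02 * a2 * a3 + (-4/3) * A02 * a5 + (-28/3) * A03 * a1 * a3 + (-14) * A03 * a1^2 * a2 + (-14/3) * A03 * a1^4 + (28/3) * A03 * a2^2 + (-20/3) * A12 * a1 * a3 + 20 * A12 * a1^2 * a2 + (80/3) * A12 * a1^4 + (-25/3) * A12 * a2^2 + (-11/3) * A12 * a4 + (-7/3) * A13 * a1 * a2 + (70/3) * A13 * a1^3 + (-7/3) * A13 * a3 + 7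 * A23 * a1^2 + (7/3) * A23 * a2)
    (72 * A02 * a1 * a2^2 + 36 * A02 * a1 * a4 + 132 * A02 * a1^2 * a3 + 244 * A02 * a1^3 * a2 + 60 * A02 * a1^5 + 12 * A02 * a2 * a3 + 4 * A02 * a5 + 28 * A03 * a1 * a3 + 168 * A03 * a1^2 * a2 + 140 * A03 * a1^4 + 50 * A12 * a1 * a3 + 90 * A12 * a1^2 * a2 + 20 * A12 * a1^4 + 25 * A12 * a2^2 + 11 * A12 * a4 + 42 * A13 * a1 * a2 + 35 * A13 * a1^3 + 7 * A13 * a3)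
    (12 * A02 * a1 * a3 + 60 * A02 * a1^2 * a2 + 40 * A02 * a1^4 + 14 * A03 * a1 * a2 + 42 * A03 * a1^3 + 15 * A12 * a1 * a2 + 10 * A12 * a1^3 + 3 * A12 * a3 + (21/2) * A13 * a1^2 + (7/2) * A13 * a2)
    (96 * A02 * a1 * a2^2 + 54 * A02 * a1 * a4 + 132 * A02 * a1^2 * a3 + 132 * A02 * a1^3 * a2 + 12 * A02 * a1^5 + 30 * A02 * a2 * a3 + 6 * A02 * a5 + 54 * A03 * a1 * a3 + 117 * A03 * a1^2 * a2 + 36 * A03 * a1^4 + 27 * A03 * a2^2 + 11 * A03 * a4 + 30 * A12 * a1 * a3 + 120 * A12 * a1^2 * a2 + 60 * A12 * a1^4 + 20 * A13 * a1 * a2 + 10 * A13 * a1^3 + 5 * A13 * a3 + 15 * A23 * a1^2 + 6 * A23 * a2)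
    (42 * A02 * a1 * a3 + 72 * A02 * a1^2 * a2 + 16 * A02 * a1^4 + 21 * A02 * a2^2 + 10 * A02 * a4 + 42 * A03 * a1 * a2 + 35 * A03 * a1^3 + 7 * A03 * a3 + 20 * A12 * a1 * a2 + 10 * A12 * a1^3 + 5 * A12 * a3)
    (30 * A02 * a1 * a2 + 20 * A02 * a1^3 + 6 * A02 * a3 + 21 * A03 * a1^2 + 7 * A03 * a2)
    (10 * A02 * a1^2 + 4 * A02 * a2 + (14/3) * A03 * a1)
    (uu_pow4 a1 a2 a3 a4 a5) (uu_pow5 a1 a2 a3 a4 a5) (uu_pow6 a1 a2 a3 a4 a5) (uu_pow7 a1 a2 a3 a4 a5)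
    (by ring)
    (by linear_combination hc130)
    (by linear_combination hc140)
    (by linear_combination hc150)
    (by ring)
    (by ring)
    (by ring)
    (by linear_combination hc112)
    (by ring)
    (by ring)
    (by ring)
    (by ring)
    (by linear_combination hc113)
    (by linear_combination hc123)
    (by linear_combination hc133)
    (by ring)
    (by ring)


lemma sameAR2_congr {Φ : (Fin 4 → ℝ) → (Fin 4 → ℝ)} {w1 w1' w2 w2' : Form2 4}
    {f : ℝ → (Fin 4 → ℝ)} (h : SameAR2 4 (pull2 4 Φ w1) w2 f)
    (h1 : ∀ x u v, w1 x u v = w1' x u v) (h2 : ∀ x u v, w2 x u v = w2' x u v) :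
    SameAR2 4 (pull2 4 Φ w1') w2' f := by
  have e1 : w1 = w1' := funext fun x => funext fun u => funext fun v => h1 x u v
  have e2 : w2 = w2' := funext fun x => funext fun u => funext fun v => h2 x u v
  rw [← e1, ← e2]
  exact h

/-- Lemma 4.4 (reduction of algebraic restrictions by local symmetries of
`g(t)=(t⁴,t⁵,t⁶,t⁷)`):
(i) the algebraic restriction of `dx₂∧dx₃ − (3/2)dx₁∧dx₄ + c₁dx₂∧dx₄ + c₂dx₃∧dx₄`
(`c₁ ≠ 0`) is diffeomorphic to that of `dx₂∧dx₃ − (3/2)dx₁∧dx₄ + c₁dx₂∧dx₄`;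
(ii) the algebraic restriction of `±dx₁∧dx₃ + c₁dx₁∧dx₄ + c₂dx₂∧dx₄ + c₃dx₃∧dx₄`
(`c₁ ≠ 0`) is diffeomorphic to that of `±dx₁∧dx₃ + c₁dx₁∧dx₄ + c₂dx₂∧dx₄`. -/
theorem algRestriction_reduction_4567 :
    (∀ c₁ c₂ : ℝ, c₁ ≠ 0 →
      ∃ (Φ : (Fin 4 → ℝ) → (Fin 4 → ℝ)) (φ : ℝ → ℝ),
        IsDiffeoGerm 4 Φ ∧ IsDiffeoGerm1 φ ∧
        (∀ᶠ t in 𝓝 (0 : ℝ), Φ (g4567 t) = g4567 (φ t)) ∧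
        SameAR2 4
          (pull2 4 Φ (fun x u v => wedge 4 1 2 x u v - (3/2) * wedge 4 0 3 x u v
            + c₁ * wedge 4 1 3 x u v + c₂ * wedge 4 2 3 x u v))
          (fun x u v => wedge 4 1 2 x u v - (3/2) * wedge 4 0 3 x u v
            + c₁ * wedge 4 1 3 x u v)
          g4567) ∧
    (∀ ε : ℝ, (ε = 1 ∨ ε = -1) → ∀ c₁ c₂ c₃ : ℝ, c₁ ≠ 0 →
      ∃ (Φ : (Fin 4 → ℝ) → (Fin 4 → ℝ)) (φ : ℝ → ℝ),
        IsDiffeoGerm 4 Φ ∧ IsDiffeoGerm1 φ ∧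
        (∀ᶠ t in 𝓝 (0 : ℝ), Φ (g4567 t) = g4567 (φ t)) ∧
        SameAR2 4
          (pull2 4 Φ (fun x u v => ε * wedge 4 0 2 x u v + c₁ * wedge 4 0 3 x u v
            + c₂ * wedge 4 1 3 x u v + c₃ * wedge 4 2 3 x u v))
          (fun x u v => ε * wedge 4 0 2 x u v + c₁ * wedge 4 0 3 x u v
            + c₂ * wedge 4 1 3 x u v)
          g4567) := by
  constructor
  · intro c₁ c₂ hc
    obtain ⟨a1, ha1⟩ : ∃ a1 : ℝ, c₁ * a1 = -45 * c₂ / 533 :=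
      ⟨-45 * c₂ / 533 / c₁, by field_simp⟩
    obtain ⟨a2, ha2⟩ : ∃ a2 : ℝ, a2 = a1 ^ 2 - 28 / 45 * (c₁ * a1) := ⟨_, rfl⟩
    obtain ⟨a3, ha3⟩ : ∃ a3 : ℝ, a3 = -(2 / 7) * (-7 * a1 * a2 + 7 / 2 * a1 ^ 3
      + 161 / 2 * c₁ * a1 ^ 2 + 7 / 2 * c₁ * a2 + 14 * c₂ * a1) := ⟨_, rfl⟩
    obtain ⟨a4, ha4⟩ : ∃ a4 : ℝ, a4 = -(2 / 35) * (15 * a1 * a3 - 495 / 2 * a1 ^ 2 * a2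
      - 435 / 2 * a1 ^ 4 + 15 / 2 * a2 ^ 2 - 50 * a1 * a3 + 150 * a1 ^ 2 * a2 + 275 * a1 ^ 4
      + 50 * a2 ^ 2 + 65 * c₁ * a1 * a2 + 225 * c₁ * a1 ^ 3 - 10 * c₁ * a3 + 75 * c₂ * a1 ^ 2
      - 5 * c₂ * a2) := ⟨_, rfl⟩
    have key := core2 a1 a2 a3 a4 0 0 (-(3/2)) 1 c₁ c₂
      (by linear_combination (45 / 2) * ha2)
      (by linear_combination (7 / 2) * ha3)
      (by linear_combination (35 / 2) * ha4)
      (by ring) (by ring) (by ring)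
      (by linear_combination (-11) * ha2 + (533 / 45) * ha1)
    obtain ⟨Φ, φ, h1, h2, h3, h4⟩ := key
    refine ⟨Φ, φ, h1, h2, h3, ?_⟩
    refine sameAR2_congr h4 (fun x u v => ?_) (fun x u v => ?_)
    · ring
    · ring
  · intro ε hε c₁ c₂ c₃ hc
    have hε2 : ε * ε = 1 := by rcases hε with h | h <;> rw [h] <;> norm_num
    obtain ⟨a2, ha2⟩ : ∃ a2 : ℝ, c₁ * a2 = -3 * c₃ / 26 :=
      ⟨-3 * c₃ / 26 / c₁, by field_simp⟩
    obtain ⟨a3, ha3⟩ : ∃ a3 : ℝ, ε * a3 = -(7 / 6) * (c₁ * a2) :=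
      ⟨ε * (-(7 / 6) * (c₁ * a2)), by rw [← mul_assoc, hε2, one_mul]⟩
    obtain ⟨a4, ha4⟩ : ∃ a4 : ℝ, ε * a4 = (1 / 14) * (21 * ε * a2 ^ 2 - 7 * c₁ * a3
        + 7 / 2 * c₂ * a2) :=
      ⟨ε * _, by rw [← mul_assoc, hε2, one_mul]⟩
    obtain ⟨a5, ha5⟩ : ∃ a5 : ℝ, ε * a5 = (1 / 10) * (30 * ε * a2 * a3 - 5 * c₁ * a2 ^ 2
        - 15 * c₁ * a4 - 10 * c₂ * a3 - 5 * c₃ * a2) :=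
      ⟨ε * _, by rw [← mul_assoc, hε2, one_mul]⟩
    have key := core2 0 a2 a3 a4 a5 ε c₁ 0 c₂ c₃
      (by linear_combination (-6) * ha3)
      (by linear_combination (-14) * ha4)
      (by linear_combination (-10) * ha5)
      (by ring) (by ring) (by ring)
      (by linear_combination (-4) * ha3 + (26 / 3) * ha2)
    obtain ⟨Φ, φ, h1, h2, h3, h4⟩ := key
    refine ⟨Φ, φ, h1, h2, h3, ?_⟩
    refine sameAR2_congr h4 (fun x u v => ?_) (fun x u v => ?_)
    · ring
    · ring
end
end

section
/- Let g:(ℝ,0)→(ℝ^3,0) be the curve-germ g(t) = (t^4,t^5,t^6). For every sign ε∈{+1,−1} and all real numbers c_1≠0, c_2, c_3, there exist germs of diffeomorphisms Φ:(ℝ^3,0)→(ℝ^3,0) and φ:(ℝ,0)→(ℝ,0) with Φ∘g = g∘φ near 0 such that the pullback Φ^*(ε·dx_1∧dx_3 + c_1·dx_2∧dx_3 + c_2·x_1dx_1∧dx_2 + c_3·x_3dx_2∧dx_3) and the 2-form ε·dx_1∧dx_3 + c_1·dx_2∧dx_3 + c_2·x_1dx_1∧dx_2 have the same algebraic restriction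 to g. -/
open Filter Topology

noncomputable section

/-- The monomial curve `g(t) = (t⁴,t⁵,t⁶)`. -/
def g456 : ℝ → (Fin 3 → ℝ) := fun t => ![t^4, t^5, t^6]

theorem aux_T (n : ℕ) : ∃ T : ℝ → ℝ, ContDiff ℝ (⊤ : ℕ∞) T ∧
    ∀ u : ℝ, (1 + u) ^ n = 1 + n * u + u ^ 2 * T u := by
  induction n with
  | zero => exact ⟨fun _ => 0, contDiff_const, fun u => by simp⟩
  | succ n ih =>
    obtain ⟨T, hT, h⟩ := ih
    refine ⟨fun u => n + (1 + u) * T u, by fun_prop, fun u => ?_⟩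
    rw [pow_succ, h]; push_cast; ring

/-- `df` helper: a smooth `F` subtracts off from `dγ`. -/
theorem aux_symm (F : (Fin 3 → ℝ) → ℝ) (hF : ContDiff ℝ (⊤ : ℕ∞) F) (x u v : Fin 3 → ℝ) :
    fderiv ℝ (fun y => fderiv ℝ F y v) x u = fderiv ℝ (fun y => fderiv ℝ F y u) x v := by
  have hd : DifferentiableAt ℝ (fderiv ℝ F) x :=
    ((hF.fderiv_right (m := 1) (by norm_cast)).differentiable (by norm_num)) x
  have key : ∀ w z, fderiv ℝ (fun y => fderiv ℝ F y w) x z = fderiv ℝ (fderiv ℝ F) x z w := by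
    intro w z
    rw [fderiv_clm_apply hd (differentiableAt_const w)]
    simp
  rw [key, key]
  have : IsSymmSndFDerivAt ℝ F x := by
    apply hF.contDiffAt.isSymmSndFDerivAt
    simp only [minSmoothness_of_isRCLikeNormedField]
    exact WithTop.coe_le_coe.2 (le_top : (2 : ℕ∞) ≤ ⊤)
  exact this u v

/-- Lemma 5.4: for `c₁ ≠ 0`, the algebraic restriction to `g(t)=(t⁴,t⁵,t⁶)` of
`±dx₁∧dx₃ + c₁dx₂∧dx₃ + c₂x₁dx₁∧dx₂ + c₃x₃dx₂∧dx₃` is diffeomorphic to that of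
`±dx₁∧dx₃ + c₁dx₂∧dx₃ + c₂x₁dx₁∧dx₂`. -/
theorem algRestriction_reduction_456
    (ε : ℝ) (hε : ε = 1 ∨ ε = -1) (c₁ c₂ c₃ : ℝ) (hc₁ : c₁ ≠ 0) :
    ∃ (Φ : (Fin 3 → ℝ) → (Fin 3 → ℝ)) (φ : ℝ → ℝ),
      IsDiffeoGerm 3 Φ ∧ IsDiffeoGerm1 φ ∧
      (∀ᶠ t in 𝓝 (0 : ℝ), Φ (g456 t) = g456 (φ t)) ∧
      SameAR2 3
        (pull2 3 Φ (fun x u v => ε * wedge 3 0 2 x u v + c₁ * wedge 3 1 2 x u v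
          + c₂ * mwedge 3 0 0 1 x u v + c₃ * mwedge 3 2 1 2 x u v))
        (fun x u v => ε * wedge 3 0 2 x u v + c₁ * wedge 3 1 2 x u v
          + c₂ * mwedge 3 0 0 1 x u v)
        g456 := by
  obtain ⟨T10, hT10, e10⟩ := aux_T 10
  obtain ⟨T11, hT11, e11⟩ := aux_T 11
  obtain ⟨T13, hT13, e13⟩ := aux_T 13
  obtain ⟨T17, hT17, e17⟩ := aux_T 17
  obtain ⟨a, ha⟩ : ∃ a : ℝ, c₃ = -17 * c₁ * a := ⟨-c₃ / (17 * c₁), by field_simp⟩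
  obtain ⟨b, hb⟩ : ∃ b : ℝ, c₁ * b = - c₂ * a := ⟨-c₂ * a / c₁, by field_simp⟩
  let w : (Fin 3 → ℝ) → ℝ := fun x => a * x 2 + b * x 0 ^ 2
  let h : (Fin 3 → ℝ) → ℝ := fun x => 1 + w x
  have hwc : ContDiff ℝ (⊤ : ℕ∞) w := by fun_prop
  have hhc : ContDiff ℝ (⊤ : ℕ∞) h := by fun_prop
  let P : (Fin 3 → ℝ) → ℝ := fun x =>
    3 * c₁ / 11 * (11 * (b * x 0 * x 1) + (a ^ 2 * x 0 ^ 2 * x 1 + 2 * a * b * x 1 ^ 3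
      + b ^ 2 * x 0 ^ 3 * x 1) * T11 (w x))
    - 2 * c₂ / 13 * (a * x 0 * x 1 + b * x 1 * x 2) * (13 + w x * T13 (w x))
    + 3 * c₃ / 17 * (a * x 0 ^ 2 * x 1 + b * x 1 ^ 3) * (17 + w x * T17 (w x))
  let Q : (Fin 3 → ℝ) → ℝ := fun x =>
    - (ε / 5) * (a * x 0 + b * x 2) * (10 + w x * T10 (w x))
    - c₁ / 11 * (11 * a * x 1 + (a ^ 2 * x 1 * x 2 + 2 * a * b * x 0 ^ 2 * x 1
      + b ^ 2 * x 1 ^ 3) * T11 (w x))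
    - c₂ / 13 * (13 * b * x 0 * x 1 + (a ^ 2 * x 0 ^ 2 * x 1 + 2 * a * b * x 1 ^ 3
      + b ^ 2 * x 0 ^ 3 * x 1) * T13 (w x))
    - c₃ / 17 * x 1 * (1 + 17 * w x + w x ^ 2 * T17 (w x))
  have hP : ContDiff ℝ (⊤ : ℕ∞) P := by fun_prop
  have hQ : ContDiff ℝ (⊤ : ℕ∞) Q := by fun_prop
  let F : (Fin 3 → ℝ) → ℝ := fun x =>
    (x 0 * x 2 - x 1 ^ 2) * P x + (x 0 ^ 3 - x 2 ^ 2) * Q x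
  have hF : ContDiff ℝ (⊤ : ℕ∞) F := by fun_prop
  let G0 : (Fin 3 → ℝ) → ℝ := fun x =>
    - (6 / 10) * ε * (x 2 * h x ^ 10 - x 2) - 5 / 13 * c₂ * (x 0 * x 1 * h x ^ 13 - x 0 * x 1)
  let G1 : (Fin 3 → ℝ) → ℝ := fun x =>
    - (6 / 11) * c₁ * (x 2 * h x ^ 11 - x 2) + 4 / 13 * c₂ * (x 0 ^ 2 * h x ^ 13 - x 0 ^ 2)
     - 6 / 17 * c₃ * (x 2 ^ 2 * h x ^ 17)
  let G2 : (Fin 3 → ℝ) → ℝ := fun x =>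
    4 / 10 * ε * (x 0 * h x ^ 10 - x 0) + 5 / 11 * c₁ * (x 1 * h x ^ 11 - x 1)
     + 5 / 17 * c₃ * (x 1 * x 2 * h x ^ 17)
  have hG0 : ContDiff ℝ (⊤ : ℕ∞) G0 := by fun_prop
  have hG1 : ContDiff ℝ (⊤ : ℕ∞) G1 := by fun_prop
  have hG2 : ContDiff ℝ (⊤ : ℕ∞) G2 := by fun_prop
  let p : Fin 3 → ((Fin 3 → ℝ) →L[ℝ] ℝ) := fun i => ContinuousLinearMap.proj i
  have hp : ∀ i x, HasFDerivAt (fun y : Fin 3 → ℝ => y i) (p i) x := fun i x => hasFDerivAt_apply i x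
  have hh : ∀ x, HasFDerivAt h _ x := fun x =>
    (((hp 2 x).const_mul a).add (((hp 0 x).pow 2).const_mul b)).const_add 1
  have hG0d : ∀ x, HasFDerivAt G0 _ x := fun x =>
    ((((hp 2 x).mul ((hh x).pow 10)).sub (hp 2 x)).const_mul (- (6 / 10) * ε)).sub
      (((((hp 0 x).mul (hp 1 x)).mul ((hh x).pow 13)).sub ((hp 0 x).mul (hp 1 x))).const_mul
        (5 / 13 * c₂))
  have hG1d : ∀ x, HasFDerivAt G1 _ x := fun x =>
    (((((hp 2 x).mul ((hh x).pow 11)).sub (hp 2 x)).const_mul (- (6 / 11) * c₁)).add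
      (((((hp 0 x).pow 2).mul ((hh x).pow 13)).sub ((hp 0 x).pow 2)).const_mul
        (4 / 13 * c₂))).sub ((((hp 2 x).pow 2).mul ((hh x).pow 17)).const_mul (6 / 17 * c₃))
  have hG2d : ∀ x, HasFDerivAt G2 _ x := fun x =>
    (((((hp 0 x).mul ((hh x).pow 10)).sub (hp 0 x)).const_mul (4 / 10 * ε)).add
      ((((hp 1 x).mul ((hh x).pow 11)).sub (hp 1 x)).const_mul
        (5 / 11 * c₁))).add ((((hp 1 x).mul (hp 2 x)).mul ((hh x).pow 17)).const_mul (5 / 17 * c₃))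
  let Φ : (Fin 3 → ℝ) → (Fin 3 → ℝ) := fun x => ![x 0 * h x ^ 4, x 1 * h x ^ 5, x 2 * h x ^ 6]
  have hΦc : ContDiff ℝ (⊤ : ℕ∞) Φ := by
    rw [contDiff_pi]
    intro i
    fin_cases i <;> simp [Φ] <;> fun_prop
  have hΦ0 : ∀ x, HasFDerivAt (fun y => Φ y 0) _ x := fun x => (hp 0 x).mul ((hh x).pow 4)
  have hΦ1 : ∀ x, HasFDerivAt (fun y => Φ y 1) _ x := fun x => (hp 1 x).mul ((hh x).pow 5)
  have hΦ2 : ∀ x, HasFDerivAt (fun y => Φ y 2) _ x := fun x => (hp 2 x).mul ((hh x).pow 6)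
  have hΦd : ∀ x, HasFDerivAt Φ (fderiv ℝ Φ x) x := fun x =>
    (hΦc.differentiable (by simp) x).hasFDerivAt
  have hΦi : ∀ x u i, fderiv ℝ Φ x u i = fderiv ℝ (fun y => Φ y i) x u := by
    intro x u i
    rw [((hasFDerivAt_pi'.1 (hΦd x)) i).fderiv]; rfl
  have h00 : h 0 = 1 := by simp [h, w]
  refine ⟨Φ, fun t => t * (1 + a * t ^ 6 + b * t ^ 8), ⟨?_, ⟨Set.univ, univ_mem, hΦc.contDiffOn⟩,
    ContinuousLinearEquiv.refl ℝ _, ?_⟩, ⟨by simp, ⟨Set.univ, univ_mem, ?_⟩, ?_⟩, ?_, ?_⟩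
  · ext i; fin_cases i <;> simp [Φ]
  · convert hΦd 0 using 1
    ext1 u
    funext i
    rw [hΦi]
    fin_cases i
    · simp [(hΦ0 0).fderiv, h00, p]
    · simp [(hΦ1 0).fderiv, h00, p]
    · simp [(hΦ2 0).fderiv, h00, p]
  · apply ContDiff.contDiffOn; fun_prop
  · have : HasDerivAt (fun t : ℝ => t * (1 + a * t ^ 6 + b * t ^ 8)) _ 0 :=
      (hasDerivAt_id (0:ℝ)).mul ((((hasDerivAt_pow 6 (0:ℝ)).const_mul a).const_add 1).add
        ((hasDerivAt_pow 8 (0:ℝ)).const_mul b))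
    rw [this.deriv]; simp
  · refine Eventually.of_forall fun t => ?_
    ext i
    fin_cases i <;> simp [Φ, g456, h, w] <;> ring
  · refine ⟨fun _ _ _ => 0, fun x v => G0 x * v 0 + G1 x * v 1 + G2 x * v 2 - fderiv ℝ F x v,
      ⟨by simp, by simp, fun _ _ => ⟨Set.univ, univ_mem, contDiffOn_const⟩⟩,
      ⟨?_, fun u => ⟨Set.univ, univ_mem, ?_⟩⟩, ?_, ?_, ?_⟩
    · intro x u₁ u₂ c
      simp only [map_add, map_smul, Pi.add_apply, Pi.smul_apply, smul_eq_mul]; ring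
    · apply ContDiff.contDiffOn
      have : ContDiff ℝ (⊤ : ℕ∞) (fderiv ℝ F) := hF.fderiv_right (by norm_cast)
      fun_prop
    · exact Eventually.of_forall fun t u v => rfl
    · refine Eventually.of_forall fun t v => ?_
      have hPd := (hP.differentiable (by simp) (g456 t)).hasFDerivAt
      have hQd := (hQ.differentiable (by simp) (g456 t)).hasFDerivAt
      have hFd : HasFDerivAt F _ (g456 t) :=
        ((((hp 0 _).mul (hp 2 _)).sub ((hp 1 _).pow 2)).mul hPd).add
         ((((hp 0 _).pow 3).sub ((hp 2 _).pow 2)).mul hQd)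
      have g0 : g456 t 0 = t ^ 4 := rfl
      have g1 : g456 t 1 = t ^ 5 := rfl
      have g2 : g456 t 2 = t ^ 6 := rfl
      have z1 : t ^ 4 * t ^ 6 - (t ^ 5) ^ 2 = 0 := by ring
      have z2 : (t ^ 4) ^ 3 - (t ^ 6) ^ 2 = 0 := by ring
      have hfd : fderiv ℝ F (g456 t) v = P (g456 t) * (t ^ 6 * v 0 - 2 * t ^ 5 * v 1 + t ^ 4 * v 2)
          + Q (g456 t) * (3 * t ^ 8 * v 0 - 2 * t ^ 6 * v 2) := by
        rw [hFd.fderiv]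
        simp [g0, g1, g2, p, z1, z2]
        ring
      beta_reduce
      rw [hfd]
      have hw : w (g456 t) = a * t ^ 6 + b * t ^ 8 := by simp only [w, g0, g2]; ring
      simp only [G0, G1, G2, P, Q, h, g0, g1, g2, e10, e11, e13, e17, hw, ha]
      push_cast
      generalize T10 _ = A
      generalize T11 _ = B
      generalize T13 _ = C
      generalize T17 _ = D
      linear_combination (-3 * t ^ 15 * v 0 + 2 * t ^ 13 * v 2) * hb
    · refine Eventually.of_forall fun x u v => ?_
      have hFs := aux_symm F hF x u v
      have hdF : ∀ z, DifferentiableAt ℝ (fun y => fderiv ℝ F y z) x := by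
        intro z
        have : ContDiff ℝ (⊤ : ℕ∞) (fderiv ℝ F) := hF.fderiv_right (by norm_cast)
        have : ContDiff ℝ (⊤ : ℕ∞) (fun y => fderiv ℝ F y z) := by fun_prop
        exact this.differentiable (by simp) x
      have hβ : ∀ z s, fderiv ℝ (fun y => G0 y * z 0 + G1 y * z 1 + G2 y * z 2 - fderiv ℝ F y z) x s
          = fderiv ℝ G0 x s * z 0 + fderiv ℝ G1 x s * z 1 + fderiv ℝ G2 x s * z 2
            - fderiv ℝ (fun y => fderiv ℝ F y z) x s := by
        intro z s
        have := (((((hG0.differentiable (by simp) x).hasFDerivAt.mul_const (z 0)).add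
          ((hG1.differentiable (by simp) x).hasFDerivAt.mul_const (z 1))).add
          ((hG2.differentiable (by simp) x).hasFDerivAt.mul_const (z 2))).sub (hdF z).hasFDerivAt)
        erw [this.fderiv]
        simp
        ring
      simp only [extD1, hβ, hFs, pull2, wedge, mwedge, hΦi]
      rw [(hΦ0 x).fderiv, (hΦ1 x).fderiv, (hΦ2 x).fderiv, (hG0d x).fderiv, (hG1d x).fderiv,
        (hG2d x).fderiv]
      have f0 : Φ x 0 = x 0 * h x ^ 4 := rfl
      have f2 : Φ x 2 = x 2 * h x ^ 6 := rfl
      rw [f0, f2]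
      generalize h x = H
      simp [p]
      ring
end
end
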